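/- Fix r ∈ (0,1), a unit vector y ∈ ℝ^d, λ ∈ (2r-1, 1) with λ > 0, and n ∈ ℕ with n ≥ 2, and set η := 2·sqrt(log n). For each m, with margins ε⁻ = ε⁺ = ε_m(λ,η,r), let N_I(X) and N_II(X) denote the numbers of type I and type II errors for a corpus X of unit vectors with |X| = n. Then lim_{m→∞} sup_{|X|=n} (E[N_I(X)] + E[N_II(X)])/n ≤ 1/(n²·sqrt(8π log n)). -/

import Mathlib

open MeasureTheory ProbabilityTheory Filter Topology

noncomputable section

/-- Centered bivariate Gaussian pair `(w, v)` in which `w` and `v` are each standard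
normal and `E[w v] = lam`, realized as the law of `(z₁, lam·z₁ + √(1-lam²)·z₂)`
for independent standard normals `z₁, z₂`. -/
def gaussPair (lam : ℝ) : Measure (ℝ × ℝ) :=
  Measure.map (fun z : ℝ × ℝ => (z.1, lam * z.1 + Real.sqrt (1 - lam ^ 2) * z.2))
    ((gaussianReal 0 1).prod (gaussianReal 0 1))

/-- `μ(λ,h) = P(w ≥ h ∧ v ≥ h)`. -/
def mu (lam h : ℝ) : ℝ := (gaussPair lam {p : ℝ × ℝ | h ≤ p.1 ∧ h ≤ p.2}).toReal

/-- `σ(λ,h) = sqrt(μ(λ,h)(1-μ(λ,h)))`. -/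
def sigma' (lam h : ℝ) : ℝ := Real.sqrt (mu lam h * (1 - mu lam h))

/-- The threshold `h_m = sqrt(2 r log m)`. -/
def hthr (r : ℝ) (m : ℕ) : ℝ := Real.sqrt (2 * r * Real.log m)

/-- `μ_m(λ) = μ(λ, h_m)`. -/
def muM (r : ℝ) (m : ℕ) (lam : ℝ) : ℝ := mu lam (hthr r m)

/-- `σ_m(λ) = σ(λ, h_m)`. -/
def sigM (r : ℝ) (m : ℕ) (lam : ℝ) : ℝ := sigma' lam (hthr r m)

/-- Canonical probability space carrying `m` i.i.d. random vectors in `ℝ^d`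
whose coordinates are i.i.d. standard normal: `a_i ω := ω i`. -/
def Prob (d m : ℕ) : Measure (Fin m → Fin d → ℝ) :=
  Measure.pi fun _ => Measure.pi fun _ : Fin d => gaussianReal 0 1

/-- Euclidean inner product on `ℝ^d`. -/
def dotp {d : ℕ} (a x : Fin d → ℝ) : ℝ := ∑ j, a j * x j

/-- `x` lies on the unit sphere `S^{d-1}`. -/
def unitVec {d : ℕ} (x : Fin d → ℝ) : Prop := ∑ j, x j ^ 2 = 1

/-- The score `S_m(x,y) = (1/m) ∑_i 1[⟨a_i,x⟩ ≥ h_m]·1[⟨a_i,y⟩ ≥ h_m]`. -/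
def score (d m : ℕ) (r : ℝ) (x y : Fin d → ℝ) (ω : Fin m → Fin d → ℝ) : ℝ :=
  (1 / (m : ℝ)) * ∑ i, (if hthr r m ≤ dotp (ω i) x then (1 : ℝ) else 0) *
    (if hthr r m ≤ dotp (ω i) y then (1 : ℝ) else 0)

/-- The standard normal cumulative distribution function `Φ`. -/
def Phi (t : ℝ) : ℝ := (gaussianReal 0 1 (Set.Iic t)).toReal

/-- The standard normal upper tail `P(N(0,1) ≥ t)`. -/
def gaussTail (t : ℝ) : ℝ := (gaussianReal 0 1 {z : ℝ | t ≤ z}).toReal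

/-- `ε_m(λ,η,r) = C(λ,r,m,η)·m^{-(λ-(2r-1))/(2(1+λ))}` with
`C = √(2π)·(1+λ)·(1-λ²)^{1/4}·η/√(2r log m)`. -/
def epsm (r lam eta : ℝ) (m : ℕ) : ℝ :=
  (Real.sqrt (2 * Real.pi) * (1 + lam) * (1 - lam ^ 2) ^ ((1 : ℝ) / 4) * eta /
    Real.sqrt (2 * r * Real.log m)) * (m : ℝ) ^ (-(lam - (2 * r - 1)) / (2 * (1 + lam)))

/-- Number of type I errors: documents `x` of the corpus with `⟨x,y⟩ ≤ λ - ε⁻`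
that are retrieved, i.e. `S_m(x,y) ≥ μ_m(λ)`. -/
def NI (d m n : ℕ) (r lam em : ℝ) (y : Fin d → ℝ) (X : Fin n → Fin d → ℝ)
    (ω : Fin m → Fin d → ℝ) : ℝ :=
  ∑ i, if dotp (X i) y ≤ lam - em ∧ muM r m lam ≤ score d m r (X i) y ω then 1 else 0

/-- Number of type II errors: documents `x` of the corpus with `⟨x,y⟩ ≥ λ + ε⁺`
that are not retrieved, i.e. `S_m(x,y) < μ_m(λ)`. -/
def NII (d m n : ℕ) (r lam ep : ℝ) (y : Fin d → ℝ) (X : Fin n → Fin d → ℝ)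
    (ω : Fin m → Fin d → ℝ) : ℝ :=
  ∑ i, if lam + ep ≤ dotp (X i) y ∧ ¬ muM r m lam ≤ score d m r (X i) y ω then 1 else 0

/-- binomial weights -/
def bw (m : ℕ) (p : ℝ) (j : ℕ) : ℝ := (m.choose j : ℝ) * p ^ j * (1 - p) ^ (m - j)

lemma bw_nonneg (m : ℕ) {p : ℝ} (h0 : 0 ≤ p) (h1 : p ≤ 1) (j : ℕ) : 0 ≤ bw m p j := by
  unfold bw
  have : 0 ≤ 1 - p := by linarith
  positivity

lemma bw_succ (m : ℕ) (p : ℝ) (j : ℕ) (hj : j < m) :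
    bw m p (j + 1) * ((j : ℝ) + 1) * (1 - p) = bw m p j * ((m : ℝ) - j) * p := by
  unfold bw
  have h := Nat.choose_succ_right_eq m j
  have h' : ((m.choose (j+1) : ℕ) : ℝ) * ((j : ℝ) + 1) = (m.choose j : ℝ) * ((m : ℝ) - j) := by
    have := congrArg (fun n : ℕ => (n : ℝ)) h
    push_cast [Nat.cast_sub hj.le] at this
    exact this
  have e : m - j = (m - (j + 1)) + 1 := by omega
  rw [e, pow_succ, pow_succ]
  linear_combination (p ^ j * p * (1 - p) ^ (m - (j + 1)) * (1 - p)) * h'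

lemma upper_geom (m k : ℕ) (hk : k ≤ m) {p : ℝ} (h0 : 0 ≤ p) (h1 : p ≤ 1) :
    (∑ j ∈ Finset.Icc k m, bw m p j) * ((k : ℝ) + 1 - p * (m + 1)) ≤
      ((k : ℝ) + 1) * (1 - p) * bw m p k := by
  have hs : ∑ j ∈ Finset.Icc k m, bw m p j = bw m p k + ∑ j ∈ Finset.Ico k m, bw m p (j + 1) := by
    rw [← Finset.Ico_succ_right_eq_Icc, Finset.sum_Ico_add' (bw m p) k m 1]
    rw [Finset.sum_eq_sum_Ico_succ_bot (by simp; omega)]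
    rfl
  have hs2 : ∑ j ∈ Finset.Icc k m, bw m p j = (∑ j ∈ Finset.Ico k m, bw m p j) + bw m p m := by
    rw [← Finset.Ico_succ_right_eq_Icc]
    exact Finset.sum_Ico_succ_top hk _
  have hle : ((k : ℝ) + 1) * (1 - p) * ∑ j ∈ Finset.Ico k m, bw m p (j + 1) ≤
      ((m : ℝ) - k) * p * ∑ j ∈ Finset.Ico k m, bw m p j := by
    rw [Finset.mul_sum, Finset.mul_sum]
    apply Finset.sum_le_sum
    intro j hj
    rw [Finset.mem_Ico] at hj
    have e := bw_succ m p j hj.2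
    have hkj : (k : ℝ) ≤ j := by exact_mod_cast hj.1
    have b1 := bw_nonneg m h0 h1 j
    have b2 := bw_nonneg m h0 h1 (j+1)
    have : 0 ≤ 1 - p := by linarith
    have A : ((k : ℝ) + 1) * (1 - p) * bw m p (j + 1) ≤ ((j : ℝ) + 1) * (1 - p) * bw m p (j + 1) := by
      gcongr
    have B : ((m : ℝ) - j) * p * bw m p j ≤ ((m : ℝ) - k) * p * bw m p j := by
      gcongr
    linarith
  have hmk : (0 : ℝ) ≤ ((m : ℝ) - k) * p := by
    have : (k : ℝ) ≤ m := by exact_mod_cast hk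
    exact mul_nonneg (by linarith) h0
  have b3 := mul_nonneg hmk (bw_nonneg m h0 h1 m)
  set S := ∑ j ∈ Finset.Icc k m, bw m p j
  have e1 : ∑ j ∈ Finset.Ico k m, bw m p (j + 1) = S - bw m p k := by linarith
  have e2 : ∑ j ∈ Finset.Ico k m, bw m p j = S - bw m p m := by linarith
  rw [e1, e2] at hle
  linarith

lemma lower_geom (m k : ℕ) (hk : k ≤ m) {p : ℝ} (h0 : 0 ≤ p) (h1 : p ≤ 1) :
    (∑ j ∈ Finset.range (k + 1), bw m p j) * (((m : ℝ) + 1) * p - k) ≤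
      ((m : ℝ) - k + 1) * p * bw m p k := by
  have hs : ∑ j ∈ Finset.range (k + 1), bw m p j = (∑ j ∈ Finset.range k, bw m p j) + bw m p k :=
    Finset.sum_range_succ _ _
  have hs2 : ∑ j ∈ Finset.range (k + 1), bw m p j
      = (∑ j ∈ Finset.range k, bw m p (j + 1)) + bw m p 0 := Finset.sum_range_succ' _ _
  have hle : ((m : ℝ) - k + 1) * p * ∑ j ∈ Finset.range k, bw m p j ≤
      (k : ℝ) * (1 - p) * ∑ j ∈ Finset.range k, bw m p (j + 1) := by
    rw [Finset.mul_sum, Finset.mul_sum]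
    apply Finset.sum_le_sum
    intro j hj
    rw [Finset.mem_range] at hj
    have e := bw_succ m p j (by omega)
    have hkj : (j : ℝ) + 1 ≤ k := by exact_mod_cast hj
    have b1 := bw_nonneg m h0 h1 j
    have b2 := bw_nonneg m h0 h1 (j+1)
    have : 0 ≤ 1 - p := by linarith
    have A : ((j : ℝ) + 1) * (1 - p) * bw m p (j + 1) ≤ (k : ℝ) * (1 - p) * bw m p (j + 1) := by
      gcongr
    have B : ((m : ℝ) - k + 1) * p * bw m p j ≤ ((m : ℝ) - j) * p * bw m p j := by
      gcongr; linarith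
    linarith
  have b3 := mul_nonneg (mul_nonneg (Nat.cast_nonneg (α := ℝ) k) (by linarith : (0:ℝ) ≤ 1 - p))
    (bw_nonneg m h0 h1 0)
  set S := ∑ j ∈ Finset.range (k + 1), bw m p j
  have e1 : ∑ j ∈ Finset.range k, bw m p j = S - bw m p k := by linarith
  have e2 : ∑ j ∈ Finset.range k, bw m p (j + 1) = S - bw m p 0 := by linarith
  rw [e1, e2] at hle
  linarith

lemma bw_stirling (m k : ℕ) (hk0 : 0 < k) (hk : k < m) :
    bw m ((k : ℝ) / m) k ≤ Stirling.stirlingSeq m / Real.sqrt Real.pi *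
      (Real.sqrt (m / (m - k)) / (Real.sqrt (2 * Real.pi) * Real.sqrt k)) := by
  obtain ⟨l, rfl⟩ : ∃ l, m = k + l := ⟨m - k, by omega⟩
  have hl : 0 < l := by omega
  have hkR : (0:ℝ) < k := by exact_mod_cast hk0
  have hlR : (0:ℝ) < l := by exact_mod_cast hl
  have s1 := Stirling.sqrt_pi_le_stirlingSeq hk0.ne'
  have s2 := Stirling.sqrt_pi_le_stirlingSeq hl.ne'
  have hpi : 0 < Real.sqrt Real.pi := Real.sqrt_pos.2 Real.pi_pos
  have fac : ∀ n : ℕ, 0 < n → (n.factorial : ℝ) = Stirling.stirlingSeq n * (Real.sqrt (2 * n) * (n / Real.exp 1) ^ n) := by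
    intro n hn
    have : (0:ℝ) < n := by exact_mod_cast hn
    unfold Stirling.stirlingSeq
    field_simp
  have hch : ((k + l).choose k : ℝ) = (k+l).factorial / (k.factorial * l.factorial) := by
    rw [Nat.cast_add_choose]
  have key : bw (k + l) ((k : ℝ) / ((k + l : ℕ):ℝ)) k
      = Stirling.stirlingSeq (k+l) / (Stirling.stirlingSeq k * Stirling.stirlingSeq l) *
        (Real.sqrt (2 * (k + l : ℕ)) / (Real.sqrt (2 * k) * Real.sqrt (2 * l))) := by
    unfold bw
    rw [hch, fac _ hk0, fac _ hl, fac (k+l) (by omega)]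
    have e : 1 - (k : ℝ) / ((k + l : ℕ):ℝ) = l / ((k + l : ℕ):ℝ) := by
      push_cast; field_simp; ring
    rw [e, Nat.add_sub_cancel_left]
    have hp : (0:ℝ) < ((k+l : ℕ) : ℝ) := by push_cast; positivity
    have : 0 < Stirling.stirlingSeq k := by linarith
    have : 0 < Stirling.stirlingSeq l := by linarith
    simp only [div_pow]
    rw [pow_add, pow_add]
    field_simp
  rw [key]
  have hsm : 0 ≤ Stirling.stirlingSeq (k+l) := by
    have := Stirling.sqrt_pi_le_stirlingSeq (n := k + l) (by omega); linarith
  have e3 : (Real.sqrt (2 * (k + l : ℕ)) / (Real.sqrt (2 * k) * Real.sqrt (2 * l)))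
     = Real.sqrt Real.pi * (Real.sqrt (((k+l : ℕ):ℝ) / (((k+l : ℕ):ℝ) - k)) / (Real.sqrt (2 * Real.pi) * Real.sqrt k)) := by
    push_cast
    rw [add_sub_cancel_left, Real.sqrt_div (by positivity), Real.sqrt_mul (by norm_num), Real.sqrt_mul (by norm_num), Real.sqrt_mul (by norm_num), Real.sqrt_mul (by norm_num)]
    field_simp
  rw [e3, ← mul_assoc]
  apply mul_le_mul_of_nonneg_right _ (by positivity)
  have hpp : Real.sqrt Real.pi * Real.sqrt Real.pi ≤ Stirling.stirlingSeq k * Stirling.stirlingSeq l := by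
    gcongr
    linarith
  calc _ ≤ Stirling.stirlingSeq (k+l) / (Real.sqrt Real.pi * Real.sqrt Real.pi) * Real.sqrt Real.pi := by gcongr
    _ = _ := by field_simp

lemma bw_compare_upper (m k : ℕ) (hk0 : 0 < k) (hk : k < m) {p : ℝ} (h0 : 0 ≤ p) (hp : m * p < k) :
    bw m p k ≤ bw m ((k : ℝ) / m) k * Real.exp (-((k - m * p) ^ 2 / (2 * k))) := by
  have hkR : (0:ℝ) < k := by exact_mod_cast hk0
  have hkm : (k:ℝ) < m := by exact_mod_cast hk
  have hm : (0:ℝ) < m := by linarith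
  set q : ℝ := (k:ℝ)/m with hq
  have hq0 : 0 < q := by positivity
  have hq1 : q < 1 := by rw [hq, div_lt_one hm]; exact hkm
  have hpq : p < q := by rw [hq, lt_div_iff₀ hm]; linarith
  set u := (q - p) / q with hu
  have hu0 : 0 ≤ u := div_nonneg (by linarith) hq0.le
  have hu1 : u ≤ 1 := by rw [hu, div_le_one hq0]; linarith
  have hpu : p = q * (1 - u) := by rw [hu]; field_simp; ring
  have hpv : 1 - p = (1 - q) * (1 + (q - p)/(1-q)) := by
    have : 1 - q ≠ 0 := by linarith
    field_simp; ring
  have i1 : 1 - u ≤ Real.exp (-(u + u^2/2)) := by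
    rcases hu1.eq_or_lt with h | h
    · rw [h]; simp [Real.exp_nonneg]
    · have hs := Real.hasSum_pow_div_log_of_abs_lt_one (x := u) (by rw [abs_of_nonneg hu0]; exact h)
      have := sum_le_hasSum (Finset.range 2) (fun i _ => by positivity) hs
      norm_num [Finset.sum_range_succ] at this
      rw [← Real.log_le_iff_le_exp (by linarith)]
      linarith
  have i2 : 1 + (q - p)/(1-q) ≤ Real.exp ((q-p)/(1-q)) := by
    have := Real.add_one_le_exp ((q-p)/(1-q)); linarith
  have j1 : p ^ k ≤ q ^ k * Real.exp (-(k * (u + u^2/2))) := by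
    rw [neg_mul_eq_mul_neg, Real.exp_nat_mul, ← mul_pow]
    apply pow_le_pow_left₀ h0
    calc p = q * (1 - u) := hpu
      _ ≤ _ := by gcongr
  have j2 : (1-p) ^ (m-k) ≤ (1-q) ^ (m-k) * Real.exp ((m - k : ℕ) * ((q-p)/(1-q))) := by
    rw [Real.exp_nat_mul, ← mul_pow]
    apply pow_le_pow_left₀ (by linarith)
    calc 1 - p = _ := hpv
      _ ≤ _ := by gcongr
  have ex : -((k - m * p) ^ 2 / (2 * k)) = -(k * (u + u^2/2)) + (m - k : ℕ) * ((q-p)/(1-q)) := by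
    rw [Nat.cast_sub hk.le]
    have ek : (k:ℝ) = m * q := by rw [hq]; field_simp
    rw [ek, hu]
    have : 1 - q ≠ 0 := by linarith
    field_simp
    ring
  rw [ex, Real.exp_add]
  unfold bw
  have h1q : 0 ≤ 1 - q := by linarith
  have h1p : 0 ≤ 1 - p := by linarith
  calc (m.choose k : ℝ) * p ^ k * (1 - p) ^ (m - k) ≤ (m.choose k : ℝ) * (q ^ k * Real.exp (-(k * (u + u^2/2)))) * ((1-q) ^ (m-k) * Real.exp ((m - k : ℕ) * ((q-p)/(1-q)))) := by gcongr
    _ = _ := by ring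

lemma bw_compare_lower (m k : ℕ) (hk0 : 0 < k) (hk : k < m) {p : ℝ} (h1 : p ≤ 1) (hp : k < m * p) :
    bw m p k ≤ bw m ((k : ℝ) / m) k * Real.exp (-((m * p - k) ^ 2 / (2 * (m * p)))) := by
  have hkR : (0:ℝ) < k := by exact_mod_cast hk0
  have hkm : (k:ℝ) < m := by exact_mod_cast hk
  have hm : (0:ℝ) < m := by linarith
  set q : ℝ := (k:ℝ)/m with hq
  have hq0 : 0 < q := by positivity
  have hq1 : q < 1 := by rw [hq, div_lt_one hm]; exact hkm
  have hpq : q < p := by rw [hq, div_lt_iff₀ hm]; linarith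
  have h0 : 0 < p := by linarith
  have hpv : 1 - p = (1 - q) * (1 + (q - p)/(1-q)) := by
    have : 1 - q ≠ 0 := by linarith
    field_simp; ring
  have i1 : p / q ≤ Real.exp ((p/q - q/p)/2) := by
    have hx : 0 < p / q := by positivity
    have : Real.log (p/q) ≤ Real.sinh (Real.log (p/q)) := by
      rw [Real.self_le_sinh_iff]
      apply Real.log_nonneg
      rw [one_le_div hq0]; exact hpq.le
    rw [Real.sinh_log hx, inv_div] at this
    calc p / q = Real.exp (Real.log (p/q)) := (Real.exp_log hx).symm
      _ ≤ _ := Real.exp_le_exp.2 this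
  have i2 : 1 + (q - p)/(1-q) ≤ Real.exp ((q-p)/(1-q)) := by
    have := Real.add_one_le_exp ((q-p)/(1-q)); linarith
  have j1 : p ^ k ≤ q ^ k * Real.exp (k * ((p/q - q/p)/2)) := by
    rw [Real.exp_nat_mul, ← mul_pow]
    apply pow_le_pow_left₀ h0.le
    calc p = q * (p / q) := by field_simp
      _ ≤ _ := by gcongr
  have j2 : (1-p) ^ (m-k) ≤ (1-q) ^ (m-k) * Real.exp ((m - k : ℕ) * ((q-p)/(1-q))) := by
    rw [Real.exp_nat_mul, ← mul_pow]
    apply pow_le_pow_left₀ (by linarith)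
    calc 1 - p = _ := hpv
      _ ≤ _ := by gcongr
  have ex : -((m * p - k) ^ 2 / (2 * (m * p))) = k * ((p/q - q/p)/2) + (m - k : ℕ) * ((q-p)/(1-q)) := by
    rw [Nat.cast_sub hk.le]
    have ek : (k:ℝ) = m * q := by rw [hq]; field_simp
    rw [ek]
    have : 1 - q ≠ 0 := by linarith
    field_simp
    ring
  rw [ex, Real.exp_add]
  unfold bw
  have h1q : 0 ≤ 1 - q := by linarith
  have h1p : 0 ≤ 1 - p := by linarith
  calc (m.choose k : ℝ) * p ^ k * (1 - p) ^ (m - k) ≤ (m.choose k : ℝ) * (q ^ k * Real.exp (k * ((p/q - q/p)/2))) * ((1-q) ^ (m-k) * Real.exp ((m - k : ℕ) * ((q-p)/(1-q)))) := by gcongr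
    _ = _ := by ring


lemma gaussPair_eq {d : ℕ} (x y : Fin d → ℝ) (hx : unitVec x) (hy : unitVec y) :
    (Measure.pi fun _ : Fin d => gaussianReal 0 1).map (fun a => (dotp a x, dotp a y)) =
      gaussPair (dotp x y) := by
  set lam := dotp x y with hl
  have hcs : lam ^ 2 ≤ 1 := by
    have := Finset.sum_mul_sq_le_sq_mul_sq Finset.univ x y
    unfold unitVec at hx hy
    rw [hx, hy] at this
    rw [hl]; unfold dotp; linarith
  let T : (Fin d → ℝ) →L[ℝ] ℝ × ℝ :=
    ContinuousLinearMap.prod (∑ j, x j • ContinuousLinearMap.proj j)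
      (∑ j, y j • ContinuousLinearMap.proj j)
  have hT : (fun a => (dotp a x, dotp a y)) = T := by
    funext a
    simp [T, dotp, mul_comm]
  let U : (ℝ × ℝ) →L[ℝ] ℝ × ℝ :=
    ContinuousLinearMap.prod (ContinuousLinearMap.fst ℝ ℝ ℝ)
      (lam • ContinuousLinearMap.fst ℝ ℝ ℝ + Real.sqrt (1 - lam ^ 2) • ContinuousLinearMap.snd ℝ ℝ ℝ)
  have hU : (fun z : ℝ × ℝ => (z.1, lam * z.1 + Real.sqrt (1 - lam ^ 2) * z.2)) = U := by
    funext a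
    simp [U]
  have hg : ∀ L : StrongDual ℝ ℝ, charFunDual (gaussianReal 0 1) L = Complex.exp (-((L 1 : ℝ) : ℂ)^2/2) := by
    intro L
    rw [IsGaussian.charFunDual_eq]
    have := integral_continuousLinearMap_gaussianReal (μ := 0) (v := 1) L
    have h2 := variance_continuousLinearMap_gaussianReal (μ := 0) (v := 1) L
    rw [integral_complex_ofReal, this, h2]
    simp [max_eq_left (sq_nonneg (L 1))]
    ring_nf
  unfold gaussPair
  rw [hT, hU]
  have : IsProbabilityMeasure ((Measure.pi fun _ : Fin d => gaussianReal 0 1).map T) := 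
    Measure.isProbabilityMeasure_map (by fun_prop)
  have : IsProbabilityMeasure (((gaussianReal 0 1).prod (gaussianReal 0 1)).map U) := 
    Measure.isProbabilityMeasure_map (by fun_prop)
  apply Measure.ext_of_charFunDual
  funext L
  rw [charFunDual_map, charFunDual_map, charFunDual_pi, charFunDual_prod]
  simp only [hg]
  rw [← Complex.exp_sum, ← Complex.exp_add]
  congr 1
  have hL : ∀ z : ℝ × ℝ, L z = z.1 * L (1, 0) + z.2 * L (0, 1) := by
    intro z
    have : z = z.1 • ((1:ℝ), (0:ℝ)) + z.2 • ((0:ℝ), (1:ℝ)) := by ext <;> simp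
    calc L z = L (z.1 • ((1:ℝ), (0:ℝ)) + z.2 • ((0:ℝ), (1:ℝ))) := by rw [← this]
      _ = _ := by rw [map_add, map_smul, map_smul]; rfl
  have hTs : ∀ j, T (Pi.single j 1) = (x j, y j) := by
    intro j
    rw [← hT]
    simp [dotp, Pi.single_apply]
  have hs : Real.sqrt (1 - lam ^ 2) ^ 2 = 1 - lam ^ 2 := Real.sq_sqrt (by linarith)
  set A := L (1, 0)
  set B := L (0, 1)
  have e1 : ∀ j, (L.comp T) (Pi.single j 1) = x j * A + y j * B := by
    intro j
    rw [ContinuousLinearMap.comp_apply, hTs, hL]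
  have e2 : L (U (1, 0)) = A + lam * B := by
    rw [← hU, hL]; simp
  have e3 : L (U (0, 1)) = Real.sqrt (1 - lam ^ 2) * B := by
    rw [← hU, hL]; simp
  have key : ∑ j, (-(x j * A + y j * B) ^ 2 / 2)
      = -(A + lam * B) ^ 2 / 2 + -(Real.sqrt (1 - lam ^ 2) * B) ^ 2 / 2 := by
    rw [mul_pow, hs]
    have : ∀ j, -(x j * A + y j * B) ^ 2 / 2 = -A^2/2 * x j ^ 2 + - (A * B) * (x j * y j) + -B^2/2 * y j ^ 2 := by
      intro j; ring
    simp_rw [this]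
    unfold unitVec at hx hy
    unfold dotp at hl
    rw [Finset.sum_add_distrib, Finset.sum_add_distrib, ← Finset.mul_sum, ← Finset.mul_sum, ← Finset.mul_sum, hx, hy, ← hl]
    ring
  have key' := congrArg (fun t : ℝ => (t : ℂ)) key
  push_cast at key'
  simp only [ContinuousLinearMap.comp_apply] at e1 ⊢
  simp only [ContinuousLinearMap.single_apply, ContinuousLinearMap.inl_apply, ContinuousLinearMap.inr_apply, e1, e2, e3]
  push_cast
  exact key'

lemma prob_event {d : ℕ} (x y : Fin d → ℝ) (hx : unitVec x) (hy : unitVec y) (h : ℝ) :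
    (Measure.pi fun _ : Fin d => gaussianReal 0 1).real {a | h ≤ dotp a x ∧ h ≤ dotp a y}
      = mu (dotp x y) h := by
  unfold mu
  rw [← gaussPair_eq x y hx hy, Measure.map_apply]
  · rfl
  · unfold dotp; fun_prop
  · exact (measurableSet_le measurable_const measurable_fst).inter (measurableSet_le measurable_const measurable_snd)

lemma count_prob {α : Type*} [MeasurableSpace α] (ν : Measure α) [IsProbabilityMeasure ν]
    {A : Set α} (hA : MeasurableSet A) (m : ℕ) (J : Finset ℕ) :
    open Classical in
    (Measure.pi fun _ : Fin m => ν).real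
      {ω | (Finset.univ.filter fun i => ω i ∈ A).card ∈ J} = ∑ j ∈ J, bw m (ν.real A) j := by
  classical
  have hset : {ω : Fin m → α | (Finset.univ.filter fun i => ω i ∈ A).card ∈ J}
      = ⋃ s ∈ (Finset.univ.filter fun s : Finset (Fin m) => s.card ∈ J),
        Set.pi Set.univ (fun i => if i ∈ s then A else Aᶜ) := by
    ext ω
    simp only [Set.mem_ofPred_eq, Set.mem_iUnion, Finset.mem_filter, Finset.mem_univ, true_and, Set.mem_pi, Set.mem_univ, forall_const]
    constructor
    · intro h
      refine ⟨_, h, ?_⟩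
      intro i
      by_cases hi : ω i ∈ A <;> simp [hi]
    · rintro ⟨s, hs, h⟩
      convert hs using 2
      ext i
      have := h i
      by_cases hi : i ∈ s <;> simp_all
  have hpi : ∀ s : Finset (Fin m), (Measure.pi fun _ : Fin m => ν).real
      (Set.pi Set.univ (fun i => if i ∈ s then A else Aᶜ)) = (ν.real A) ^ s.card * (1 - ν.real A) ^ (m - s.card) := by
    intro s
    rw [measureReal_def, Measure.pi_pi, ENNReal.toReal_prod]
    have : ∀ i, (ν (if i ∈ s then A else Aᶜ)).toReal = if i ∈ s then ν.real A else 1 - ν.real A := by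
      intro i
      split_ifs
      · rfl
      · exact probReal_compl_eq_one_sub hA
    simp_rw [this]
    rw [Finset.prod_ite, Finset.prod_const, Finset.prod_const]
    congr 2
    · congr 1; ext; simp
    · have := Finset.card_compl s
      rw [Fintype.card_fin] at this
      rw [← this]
      congr 1; ext; simp
  rw [hset, measureReal_biUnion_finset]
  · simp_rw [hpi]
    have : (Finset.univ.filter fun s : Finset (Fin m) => s.card ∈ J) = J.biUnion (fun j => Finset.powersetCard j Finset.univ) := by
      ext s; simp
    rw [this, Finset.sum_biUnion]
    · apply Finset.sum_congr rfl
      intro j hj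
      rw [Finset.sum_congr rfl (g := fun _ => (ν.real A) ^ j * (1 - ν.real A) ^ (m - j))]
      · simp [bw, mul_assoc]
      · intro s hs
        rw [(Finset.mem_powersetCard.1 hs).2]
    · intro i _ j _ hij
      exact Finset.pairwise_disjoint_powersetCard _ hij
  · intro s _ t _ hst
    simp only [Function.onFun]
    rw [Set.disjoint_left]
    intro ω h1 h2
    apply hst
    ext i
    have a := h1 i (Set.mem_univ _)
    have b := h2 i (Set.mem_univ _)
    by_cases i ∈ s <;> by_cases i ∈ t <;> simp_all
  · intro s _
    apply MeasurableSet.univ_pi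
    intro i
    split_ifs
    · exact hA
    · exact hA.compl


lemma pdf_std (t : ℝ) : gaussianPDFReal 0 1 t = (Real.sqrt (2 * Real.pi))⁻¹ * Real.exp (-t ^ 2 / 2) := by
  simp [gaussianPDFReal]

lemma pdf_le_one (t : ℝ) : gaussianPDFReal 0 1 t ≤ 1 := by
  rw [pdf_std]
  have h1 : Real.exp (-t ^ 2 / 2) ≤ 1 := Real.exp_le_one_iff.2 (by have := sq_nonneg t; linarith)
  have h2 : (Real.sqrt (2 * Real.pi))⁻¹ ≤ 1 := by
    apply inv_le_one_of_one_le₀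
    rw [Real.one_le_sqrt]
    have := Real.pi_gt_three; linarith
  calc _ ≤ (1:ℝ) * 1 := by gcongr
    _ = 1 := by ring

lemma continuous_pdf : Continuous (gaussianPDFReal 0 1) := by
  have : gaussianPDFReal 0 1 = fun t => (Real.sqrt (2 * Real.pi))⁻¹ * Real.exp (-t ^ 2 / 2) := by
    funext t; exact pdf_std t
  rw [this]; fun_prop

lemma gaussTail_eq (t : ℝ) : gaussTail t = ∫ x in Set.Ioi t, gaussianPDFReal 0 1 x := by
  unfold gaussTail
  rw [gaussianReal_apply_eq_integral 0 one_ne_zero, ENNReal.toReal_ofReal]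
  · exact integral_Ici_eq_integral_Ioi
  · exact integral_nonneg (fun x => gaussianPDFReal_nonneg _ _ _)

lemma gaussTail_hasDerivAt (t : ℝ) : HasDerivAt gaussTail (-gaussianPDFReal 0 1 t) t := by
  have hi := integrable_gaussianPDFReal 0 1
  have e : gaussTail = fun t => gaussTail 0 - ∫ x in (0:ℝ)..t, gaussianPDFReal 0 1 x := by
    funext t
    rw [← intervalIntegral.integral_Ioi_sub_Ioi' hi.integrableOn hi.integrableOn, gaussTail_eq, gaussTail_eq]
    ring
  rw [e]
  apply HasDerivAt.const_sub
  exact intervalIntegral.integral_hasDerivAt_right hi.intervalIntegrable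
    continuous_pdf.aestronglyMeasurable.stronglyMeasurableAtFilter continuous_pdf.continuousAt

lemma gaussTail_continuous : Continuous gaussTail :=
  continuous_iff_continuousAt.2 fun t => (gaussTail_hasDerivAt t).continuousAt

lemma gaussTail_nonneg (t : ℝ) : 0 ≤ gaussTail t := ENNReal.toReal_nonneg

lemma gaussTail_le_one (t : ℝ) : gaussTail t ≤ 1 := by
  unfold gaussTail; exact measureReal_le_one

lemma gaussTail_tendsto : Tendsto gaussTail atTop (𝓝 0) := by
  have e : gaussTail = fun t => 1 - cdf (gaussianReal 0 1) t := by
    funext t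
    rw [cdf_eq_real, gaussTail_eq, ← probReal_compl_eq_one_sub measurableSet_Iic, Set.compl_Iic,
      measureReal_def, gaussianReal_apply_eq_integral 0 one_ne_zero, ENNReal.toReal_ofReal]
    exact integral_nonneg (fun x => gaussianPDFReal_nonneg _ _ _)
  rw [e]
  have := (tendsto_cdf_atTop (gaussianReal 0 1)).const_sub 1
  simpa using this

lemma mu_prod (lam h : ℝ) : mu lam h = ((gaussianReal 0 1).prod (gaussianReal 0 1)).real
    {z : ℝ × ℝ | h ≤ z.1 ∧ h ≤ lam * z.1 + Real.sqrt (1 - lam ^ 2) * z.2} := by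
  unfold mu gaussPair
  rw [Measure.map_apply]
  · rfl
  · fun_prop
  · exact (measurableSet_le measurable_const measurable_fst).inter (measurableSet_le measurable_const measurable_snd)

lemma mu_integral (lam h : ℝ) (h1 : -1 < lam) (h2 : lam < 1) :
    mu lam h = ∫ z in Set.Ioi h, gaussTail ((h - lam * z) / Real.sqrt (1 - lam ^ 2)) ∂(gaussianReal 0 1) := by
  have hs : 0 < Real.sqrt (1 - lam ^ 2) := Real.sqrt_pos.2 (by nlinarith)
  rw [mu_prod, measureReal_def, Measure.prod_apply]
  · rw [← integral_Ici_eq_integral_Ioi' , ← integral_indicator measurableSet_Ici, ← integral_toReal]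
    · congr 1
      funext z
      by_cases hz : h ≤ z
      · rw [Set.indicator_of_mem (by exact hz)]
        unfold gaussTail
        congr 2
        ext w
        simp only [Set.mem_preimage, Set.mem_ofPred_eq, hz, true_and]
        rw [div_le_iff₀ hs]
        constructor <;> intro <;> linarith
      · rw [Set.indicator_of_notMem (by exact hz)]
        simp [hz]
    · exact (measurable_measure_prodMk_left (by measurability)).aemeasurable
    · exact Eventually.of_forall fun z => measure_lt_top _ _
    · have := nullSingletonClass_gaussianReal (μ := 0) (v := 1) one_ne_zero
      simp
  · measurability

/-- Plackett density -/
def plD (h t : ℝ) : ℝ := Real.exp (-h ^ 2 / (1 + t)) / (2 * Real.pi * Real.sqrt (1 - t ^ 2))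

lemma arg_hasDerivAt (h z t : ℝ) (ht : 0 < 1 - t ^ 2) :
    HasDerivAt (fun t => (h - t * z) / Real.sqrt (1 - t ^ 2))
      ((t * h - z) / (Real.sqrt (1 - t ^ 2)) ^ 3) t := by
  have hs : 0 < Real.sqrt (1 - t ^ 2) := Real.sqrt_pos.2 ht
  have d1 : HasDerivAt (fun t => h - t * z) (-z) t := by
    simpa using ((hasDerivAt_id t).mul_const z).const_sub h
  have d2 : HasDerivAt (fun t : ℝ => 1 - t ^ 2) (-(2 * t)) t := by
    simpa using (hasDerivAt_pow 2 t).const_sub 1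
  have d3 := d1.div (d2.sqrt ht.ne') hs.ne'
  refine HasDerivAt.congr_deriv (f := fun t => (h - t * z) / Real.sqrt (1 - t ^ 2)) d3 ?_
  have hq : Real.sqrt (1 - t ^ 2) ^ 2 = 1 - t ^ 2 := Real.sq_sqrt ht.le
  field_simp
  rw [hq]
  ring

lemma plackett_integral (h t : ℝ) (hh : 0 < h) (h1 : -1 < t) (h2 : t < 1) :
    ∫ z in Set.Ioi h, -gaussianPDFReal 0 1 ((h - t * z) / Real.sqrt (1 - t ^ 2)) *
      ((t * h - z) / (Real.sqrt (1 - t ^ 2)) ^ 3) ∂(gaussianReal 0 1) = plD h t := by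
  have hpos : 0 < 1 - t ^ 2 := by nlinarith
  have hs : 0 < Real.sqrt (1 - t ^ 2) := Real.sqrt_pos.2 hpos
  have hq : Real.sqrt (1 - t ^ 2) ^ 2 = 1 - t ^ 2 := Real.sq_sqrt hpos.le
  set s := Real.sqrt (1 - t ^ 2) with hsdef
  rw [← integral_indicator measurableSet_Ioi, integral_gaussianReal_eq_integral_smul one_ne_zero]
  have e : (fun z => gaussianPDFReal 0 1 z • (Set.Ioi h).indicator (fun z => -gaussianPDFReal 0 1 ((h - t * z) / s) *
      ((t * h - z) / s ^ 3)) z) = (Set.Ioi h).indicator (fun z => (1 / (2 * Real.pi * s)) *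
        (Real.exp (-(z ^ 2 + h ^ 2 - 2 * t * h * z) / (2 * (1 - t ^ 2))) * ((z - t * h) / (1 - t ^ 2)))) := by
    funext z
    by_cases hz : z ∈ Set.Ioi h
    · rw [Set.indicator_of_mem hz, Set.indicator_of_mem hz, pdf_std, pdf_std]
      have : Real.exp (-(z ^ 2 + h ^ 2 - 2 * t * h * z) / (2 * (1 - t ^ 2))) = Real.exp (-z^2/2) * Real.exp (-((h - t * z)/s)^2/2) := by
        rw [← Real.exp_add, div_pow, hq]
        congr 1
        field_simp
        ring
      rw [this, smul_eq_mul]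
      have h2pi : Real.sqrt (2 * Real.pi) ^ 2 = 2 * Real.pi := Real.sq_sqrt (by positivity)
      rw [← hq]
      have hne : Real.sqrt (2 * Real.pi) ≠ 0 := by positivity
      generalize Real.sqrt (2 * Real.pi) = c at h2pi hne
      rw [← h2pi]
      field_simp
      ring
    · rw [Set.indicator_of_notMem hz, Set.indicator_of_notMem hz]; simp
  rw [e, integral_indicator measurableSet_Ioi]
  have hd : ∀ z ∈ Set.Ici h, HasDerivAt (fun z => -(1 / (2 * Real.pi * s)) * Real.exp (-(z ^ 2 + h ^ 2 - 2 * t * h * z) / (2 * (1 - t ^ 2))))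
     ((1 / (2 * Real.pi * s)) *
        (Real.exp (-(z ^ 2 + h ^ 2 - 2 * t * h * z) / (2 * (1 - t ^ 2))) * ((z - t * h) / (1 - t ^ 2)))) z := by
    intro z _
    have d1 : HasDerivAt (fun z : ℝ => z ^ 2 + h ^ 2 - 2 * t * h * z) (2 * z - 2 * t * h) z := by
      have := ((hasDerivAt_pow 2 z).add_const (h^2)).sub ((hasDerivAt_id z).const_mul (2 * t * h))
      refine HasDerivAt.congr_deriv (f := fun z : ℝ => z ^ 2 + h ^ 2 - 2 * t * h * z) this ?_
      simp
    have d2 := ((d1.neg.div_const (2 * (1 - t ^ 2))).exp).const_mul (-(1 / (2 * Real.pi * s)))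
    refine HasDerivAt.congr_deriv (f := fun z => -(1 / (2 * Real.pi * s)) * Real.exp (-(z ^ 2 + h ^ 2 - 2 * t * h * z) / (2 * (1 - t ^ 2)))) d2 ?_
    simp only [Pi.neg_apply]
    field_simp
  have htend : Tendsto (fun z => -(1 / (2 * Real.pi * s)) * Real.exp (-(z ^ 2 + h ^ 2 - 2 * t * h * z) / (2 * (1 - t ^ 2)))) atTop (𝓝 0) := by
    rw [show (0:ℝ) = -(1 / (2 * Real.pi * s)) * 0 by ring]
    apply Tendsto.const_mul
    apply Real.tendsto_exp_atBot.comp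
    have : Tendsto (fun z : ℝ => -((z - t * h) ^ 2 / (2 * (1 - t^2)) + (h^2 / 2))) atTop atBot := by
      apply tendsto_neg_atTop_atBot.comp
      apply tendsto_atTop_add_const_right
      apply Tendsto.atTop_div_const (by positivity)
      exact (tendsto_pow_atTop two_ne_zero).comp (tendsto_atTop_add_const_right _ _ tendsto_id)
    refine this.congr (fun z => ?_)
    field_simp
    ring
  rw [integral_Ioi_of_hasDerivAt_of_nonneg' hd _ htend]
  · unfold plD
    rw [← hsdef]
    have : -(h ^ 2 + h ^ 2 - 2 * t * h * h) / (2 * (1 - t ^ 2)) = -h ^ 2 / (1 + t) := by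
      have : 1 + t ≠ 0 := by linarith
      field_simp
      ring
    rw [this]
    ring
  · intro z hz
    have : h < z := hz
    have : 0 ≤ z - t * h := by nlinarith
    positivity

lemma mu_hasDerivAt (h t : ℝ) (hh : 0 < h) (h1 : -1 < t) (h2 : t < 1) :
    HasDerivAt (fun t => mu t h) (plD h t) t := by
  rw [← plackett_integral h t hh h1 h2]
  set δ := (1 - |t|) / 2 with hδ
  have hab : |t| < 1 := abs_lt.2 ⟨h1, h2⟩
  have hδ0 : 0 < δ := by rw [hδ]; linarith
  have hball : ∀ u ∈ Metric.ball t δ, -1 < u ∧ u < 1 ∧ δ ≤ 1 - u ^ 2 := by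
    intro u hu
    rw [Metric.mem_ball, Real.dist_eq] at hu
    have : |u| ≤ |t| + |u - t| := by
      have := abs_add_le t (u - t); simpa using this
    have hu1 : |u| ≤ 1 - δ := by rw [hδ] at *; linarith
    have := abs_le.1 hu1
    refine ⟨by linarith, by linarith, ?_⟩
    rw [← sq_abs]
    nlinarith [abs_nonneg u]
  have ev : (fun t => mu t h) =ᶠ[𝓝 t] fun t => ∫ z in Set.Ioi h, gaussTail ((h - t * z) / Real.sqrt (1 - t ^ 2)) ∂(gaussianReal 0 1) := by
    filter_upwards [Metric.ball_mem_nhds t hδ0] with u hu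
    obtain ⟨a, b, _⟩ := hball u hu
    exact mu_integral u h a b
  refine HasDerivAt.congr_of_eventuallyEq ?_ ev
  have key := hasDerivAt_integral_of_dominated_loc_of_deriv_le (μ := (gaussianReal 0 1).restrict (Set.Ioi h))
    (F := fun t z => gaussTail ((h - t * z) / Real.sqrt (1 - t ^ 2)))
    (F' := fun t z => -gaussianPDFReal 0 1 ((h - t * z) / Real.sqrt (1 - t ^ 2)) *
      ((t * h - z) / (Real.sqrt (1 - t ^ 2)) ^ 3)) (x₀ := t) (s := Metric.ball t δ)
    (bound := fun z => (h + |z|) / (Real.sqrt δ) ^ 3) (Metric.ball_mem_nhds t hδ0) ?_ ?_ ?_ ?_ ?_ ?_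
  · exact key.2
  · apply Eventually.of_forall
    intro u
    exact (gaussTail_continuous.comp (by fun_prop)).aestronglyMeasurable
  · apply Integrable.of_bound (C := 1)
    · exact (gaussTail_continuous.comp (by fun_prop)).aestronglyMeasurable
    · apply Eventually.of_forall
      intro z
      rw [Real.norm_of_nonneg (gaussTail_nonneg _)]
      exact gaussTail_le_one _
  · exact ((continuous_pdf.comp (by fun_prop)).neg.mul (by fun_prop)).aestronglyMeasurable
  · apply Eventually.of_forall
    intro z u hu
    obtain ⟨a, b, c⟩ := hball u hu
    have hsd : 0 < Real.sqrt δ := Real.sqrt_pos.2 hδ0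
    rw [norm_mul, norm_neg, Real.norm_of_nonneg (gaussianPDFReal_nonneg _ _ _), norm_div, norm_pow, Real.norm_of_nonneg (Real.sqrt_nonneg _)]
    have n1 : ‖u * h - z‖ ≤ h + |z| := by
      rw [Real.norm_eq_abs]
      calc |u * h - z| ≤ |u * h| + |z| := abs_sub _ _
        _ ≤ _ := by
          rw [abs_mul, abs_of_pos hh]
          have : |u| ≤ 1 := abs_le.2 ⟨a.le, b.le⟩
          nlinarith
    calc _ ≤ 1 * ((h + |z|) / (Real.sqrt δ) ^ 3) := by
          gcongr
          exact pdf_le_one _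
      _ = _ := one_mul _
  · have : Integrable (fun z : ℝ => z) (gaussianReal 0 1) := (memLp_id_gaussianReal 1).integrable (by norm_num)
    exact (((integrable_const h).add this.abs).div_const _).restrict
  · apply Eventually.of_forall
    intro z u hu
    obtain ⟨a, b, c⟩ := hball u hu
    exact (gaussTail_hasDerivAt _).comp u (arg_hasDerivAt h z u (by linarith))


lemma le_of_sq_le_sq_aux {a b : ℝ} (hb : 0 ≤ b) (h : a ^ 2 ≤ b ^ 2) : a ≤ b :=
  le_trans (le_abs_self a) (abs_le_of_sq_le_sq h hb)

lemma plD_nonneg (h t : ℝ) : 0 ≤ plD h t := by unfold plD; positivity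

lemma plD_mono (h a b : ℝ) (h0 : 0 ≤ a) (hab : a ≤ b) (hb : b < 1) : plD h a ≤ plD h b := by
  unfold plD
  have hpos : 0 < 1 - b ^ 2 := by nlinarith
  have : 0 < Real.sqrt (1 - b ^ 2) := Real.sqrt_pos.2 hpos
  apply div_le_div₀ (Real.exp_nonneg _)
  · apply Real.exp_le_exp.2
    rw [neg_div, neg_div]
    apply neg_le_neg
    gcongr
  · positivity
  · gcongr

lemma mu_neg_one (h : ℝ) (hh : 0 < h) : mu (-1) h = 0 := by
  rw [mu_prod]
  have : {z : ℝ × ℝ | h ≤ z.1 ∧ h ≤ (-1) * z.1 + Real.sqrt (1 - (-1) ^ 2) * z.2} = ∅ := by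
    ext z
    simp
    intro h1; linarith
  rw [this]; simp

lemma mu_nonneg (t h : ℝ) : 0 ≤ mu t h := ENNReal.toReal_nonneg

lemma mu_le_one (t h : ℝ) : mu t h ≤ 1 := by rw [mu_prod]; exact measureReal_le_one

lemma mu_le_mu_one (t h : ℝ) : mu t h ≤ mu 1 h := by
  rw [mu_prod, mu_prod]
  refine measureReal_mono ?_ (measure_ne_top _ _)
  intro z hz
  simp at hz ⊢
  exact hz.1

lemma mu_diff_ge (h a b : ℝ) (hh : 0 < h) (h0 : 0 ≤ a) (hab : a ≤ b) (hb : b < 1) :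
    plD h a * (b - a) ≤ mu b h - mu a h := by
  have hc : ∀ x ∈ Set.Icc a b, HasDerivAt (fun t => mu t h) (plD h x) x := fun x hx =>
    mu_hasDerivAt h x hh (by linarith [hx.1]) (by linarith [hx.2])
  have := Convex.mul_sub_le_image_sub_of_le_deriv (convex_Icc a b) (f := fun t => mu t h) (C := plD h a)
    (fun x hx => (hc x hx).continuousAt.continuousWithinAt)
    (fun x hx => (hc x (interior_subset hx)).differentiableAt.differentiableWithinAt)
    (fun x hx => by
      have hx' := interior_subset hx
      rw [(hc x hx').deriv]
      exact plD_mono h a x h0 hx'.1 (by linarith [hx'.2]))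
    a (Set.left_mem_Icc.2 hab) b (Set.right_mem_Icc.2 hab) hab
  exact this

lemma mu_diff_le (h a b : ℝ) (hh : 0 < h) (h0 : 0 ≤ a) (hab : a ≤ b) (hb : b < 1) :
    mu b h - mu a h ≤ plD h b * (b - a) := by
  have hc : ∀ x ∈ Set.Icc a b, HasDerivAt (fun t => mu t h) (plD h x) x := fun x hx =>
    mu_hasDerivAt h x hh (by linarith [hx.1]) (by linarith [hx.2])
  have := Convex.image_sub_le_mul_sub_of_deriv_le (convex_Icc a b) (f := fun t => mu t h) (C := plD h b)
    (fun x hx => (hc x hx).continuousAt.continuousWithinAt)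
    (fun x hx => (hc x (interior_subset hx)).differentiableAt.differentiableWithinAt)
    (fun x hx => by
      have hx' := interior_subset hx
      rw [(hc x hx').deriv]
      exact plD_mono h x b (by linarith [hx'.1]) hx'.2 hb)
    a (Set.left_mem_Icc.2 hab) b (Set.right_mem_Icc.2 hab) hab
  exact this

lemma mu_mono (h a b : ℝ) (hh : 0 < h) (ha : -1 ≤ a) (hab : a ≤ b) (hb : b ≤ 1) :
    mu a h ≤ mu b h := by
  rcases ha.eq_or_lt with rfl | ha
  · rw [mu_neg_one h hh]; exact mu_nonneg _ _
  rcases hb.eq_or_lt with rfl | hb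
  · exact mu_le_mu_one _ _
  have hc : ∀ x ∈ Set.Icc a b, HasDerivAt (fun t => mu t h) (plD h x) x := fun x hx =>
    mu_hasDerivAt h x hh (by linarith [hx.1]) (by linarith [hx.2])
  have := Convex.mul_sub_le_image_sub_of_le_deriv (convex_Icc a b) (f := fun t => mu t h) (C := 0)
    (fun x hx => (hc x hx).continuousAt.continuousWithinAt)
    (fun x hx => (hc x (interior_subset hx)).differentiableAt.differentiableWithinAt)
    (fun x hx => by
      have hx' := interior_subset hx
      rw [(hc x hx').deriv]
      exact plD_nonneg _ _)
    a (Set.left_mem_Icc.2 hab) b (Set.right_mem_Icc.2 hab) hab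
  simp at this
  exact this

/-- Upper bound for mu. -/
def GG (h t : ℝ) : ℝ := (1 + t) ^ 2 / (2 * Real.pi * h ^ 2 * Real.sqrt (1 - t ^ 2)) * Real.exp (-h ^ 2 / (1 + t))

lemma mu_le_tail (h a : ℝ) (h1 : -1 < a) (ha : a ≤ 0) (hh : 0 < h) :
    mu a h ≤ gaussTail (h / Real.sqrt (1 - a ^ 2)) := by
  have hs : 0 < Real.sqrt (1 - a ^ 2) := Real.sqrt_pos.2 (by nlinarith)
  rw [mu_prod]
  calc _ ≤ ((gaussianReal 0 1).prod (gaussianReal 0 1)).real (Set.univ ×ˢ {z : ℝ | h / Real.sqrt (1 - a ^ 2) ≤ z}) := by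
        refine measureReal_mono ?_ (measure_ne_top _ _)
        intro z hz
        simp only [Set.mem_ofPred_eq, Set.mem_prod, Set.mem_univ, true_and] at hz ⊢
        rw [div_le_iff₀ hs]
        nlinarith [hz.1, hz.2]
    _ = _ := by
      rw [measureReal_prod_prod]; simp [gaussTail, measureReal_def]

lemma mu_le_GG (h lam : ℝ) (hh : 0 < h) (h1 : -1 < lam) (h2 : lam < 1) : mu lam h ≤ GG h lam := by
  have hposl : 0 < 1 - lam ^ 2 := by nlinarith
  have hsl : 0 < Real.sqrt (1 - lam ^ 2) := Real.sqrt_pos.2 hposl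
  set c := (1 + lam) ^ 2 / (2 * Real.pi * h ^ 2 * Real.sqrt (1 - lam ^ 2)) with hc
  have hc0 : 0 ≤ c := by positivity
  have hg : ∀ t, -1 < t → t ≤ lam → (1 + t) ^ 2 / Real.sqrt (1 - t ^ 2) ≤ (1 + lam) ^ 2 / Real.sqrt (1 - lam ^ 2) := by
    intro t ht htl
    have hpt : 0 < 1 - t ^ 2 := by nlinarith
    have hst : 0 < Real.sqrt (1 - t ^ 2) := Real.sqrt_pos.2 hpt
    rw [div_le_div_iff₀ hst hsl]
    refine le_of_sq_le_sq_aux (by positivity) ?_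
    rw [mul_pow, mul_pow, Real.sq_sqrt hpt.le, Real.sq_sqrt hposl.le]
    have i1 : (1 + t) ^ 3 * (1 - lam) ≤ (1 + lam) ^ 3 * (1 - t) := by
      have : 0 < 1 + t := by linarith
      have : 0 < 1 - lam := by linarith
      have : 0 < 1 + lam := by linarith
      apply mul_le_mul _ (by linarith) (by linarith) (by positivity)
      gcongr
    have := mul_le_mul_of_nonneg_left i1 (by nlinarith : 0 ≤ (1 + t) * (1 + lam))
    nlinarith
  have key : ∀ a, -1 < a → a ≤ lam → mu lam h ≤ GG h lam + mu a h := by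
    intro a ha hal
    have hd : ∀ x ∈ Set.Icc a lam, HasDerivAt (fun t => c * Real.exp (-h ^ 2 / (1 + t)) - mu t h)
        (c * (Real.exp (-h ^ 2 / (1 + x)) * (h ^ 2 / (1 + x) ^ 2)) - plD h x) x := by
      intro x hx
      have hx1 : 1 + x ≠ 0 := by linarith [hx.1]
      have d1 : HasDerivAt (fun x : ℝ => 1 + x) 1 x := (hasDerivAt_id x).const_add 1
      have d2 := (hasDerivAt_const x (-h ^ 2)).div d1 hx1
      have d3 : HasDerivAt (fun x : ℝ => -h ^ 2 / (1 + x)) (h ^ 2 / (1 + x) ^ 2) x :=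
        HasDerivAt.congr_deriv (f := fun x : ℝ => -h ^ 2 / (1 + x)) d2 (by ring)
      exact (d3.exp.const_mul c).sub (mu_hasDerivAt h x hh (by linarith [hx.1]) (by linarith [hx.2]))
    have := Convex.mul_sub_le_image_sub_of_le_deriv (convex_Icc a lam)
      (f := fun t => c * Real.exp (-h ^ 2 / (1 + t)) - mu t h) (C := 0)
      (fun x hx => (hd x hx).continuousAt.continuousWithinAt)
      (fun x hx => (hd x (interior_subset hx)).differentiableAt.differentiableWithinAt)
      (fun x hx => by
        have hx' := interior_subset hx
        rw [(hd x hx').deriv]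
        have hx1 : 0 < 1 + x := by linarith [hx'.1]
        have := hg x (by linarith) hx'.2
        have e : plD h x = ((1 + x) ^ 2 / Real.sqrt (1 - x ^ 2)) * (Real.exp (-h ^ 2 / (1 + x)) / (2 * Real.pi * (1 + x) ^ 2)) := by
          unfold plD; field_simp
        have e2 : c * (Real.exp (-h ^ 2 / (1 + x)) * (h ^ 2 / (1 + x) ^ 2)) = ((1 + lam) ^ 2 / Real.sqrt (1 - lam ^ 2)) * (Real.exp (-h ^ 2 / (1 + x)) / (2 * Real.pi * (1 + x) ^ 2)) := by
          rw [hc]; field_simp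
        rw [e, e2, sub_nonneg]
        gcongr)
      a (Set.left_mem_Icc.2 hal) lam (Set.right_mem_Icc.2 hal) hal
    simp only [zero_mul] at this
    have h3 : 0 ≤ c * Real.exp (-h ^ 2 / (1 + a)) := by positivity
    unfold GG
    linarith
  have lim : Tendsto (fun a => GG h lam + gaussTail (h / Real.sqrt (1 - a ^ 2))) (𝓝[>] (-1)) (𝓝 (GG h lam + 0)) := by
    apply Tendsto.const_add
    apply gaussTail_tendsto.comp
    have : Tendsto (fun a : ℝ => Real.sqrt (1 - a ^ 2)) (𝓝[>] (-1)) (𝓝[>] 0) := by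
      rw [tendsto_nhdsWithin_iff]
      constructor
      · have : Tendsto (fun a : ℝ => Real.sqrt (1 - a ^ 2)) (𝓝 (-1)) (𝓝 (Real.sqrt (1 - (-1) ^ 2))) :=
          Continuous.tendsto (by fun_prop) _
        simp at this
        exact this.mono_left nhdsWithin_le_nhds
      · filter_upwards [Ioo_mem_nhdsGT (show (-1:ℝ) < 0 by norm_num)] with a ha
        exact Real.sqrt_pos.2 (by nlinarith [ha.1, ha.2])
    have := (tendsto_inv_nhdsGT_zero.comp this).const_mul_atTop hh
    exact this
  rw [add_zero] at lim
  apply ge_of_tendsto lim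
  filter_upwards [Ioo_mem_nhdsGT (show (-1:ℝ) < 0 by norm_num), Ioo_mem_nhdsGT h1] with a ha hb
  have := key a ha.1 hb.2.le
  have := mu_le_tail h a ha.1 ha.2.le hh
  linarith

lemma mu_lower (h lam : ℝ) (hh : 0 < h) (h0 : 0 < lam) (h1 : lam < 1) (hl : 1 ≤ lam * h ^ 2) :
    Real.exp (-1) / (2 * Real.pi * h ^ 2) * Real.exp (-h ^ 2 / (1 + lam)) ≤ mu lam h := by
  have hle : 1 / h ^ 2 ≤ lam := by rw [div_le_iff₀ (by positivity)]; exact hl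
  have hp : 0 < 1 / h ^ 2 := by positivity
  have := mu_diff_ge h (lam - 1 / h ^ 2) lam hh (by linarith) (by linarith) h1
  have hn := mu_nonneg (lam - 1 / h ^ 2) h
  have hD : Real.exp (-1) * Real.exp (-h ^ 2 / (1 + lam)) / (2 * Real.pi) ≤ plD h (lam - 1 / h ^ 2) := by
    unfold plD
    rw [← Real.exp_add]
    have hlt : 0 < 1 - (lam - 1 / h ^ 2) ^ 2 := by nlinarith
    have hspos := Real.sqrt_pos.2 hlt
    apply div_le_div₀ (Real.exp_nonneg _)
    · apply Real.exp_le_exp.2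
      have hb : 0 < 1 + (lam - 1 / h ^ 2) := by linarith
      have e : -h ^ 2 / (1 + (lam - 1 / h ^ 2)) = -h ^ 2 / (1 + lam) - 1 / ((1 + lam) * (1 + (lam - 1 / h ^ 2))) := by
        generalize hw : 1 / h ^ 2 = w at *
        have hw' : h ^ 2 * w = 1 := by rw [← hw]; field_simp
        have : 1 + lam ≠ 0 := by linarith
        field_simp
        linear_combination (-1 : ℝ) * hw'
      rw [e]
      have : 1 / ((1 + lam) * (1 + (lam - 1 / h ^ 2))) ≤ 1 := by
        rw [div_le_one (by positivity)]
        nlinarith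
      linarith
    · positivity
    · have : Real.sqrt (1 - (lam - 1 / h ^ 2) ^ 2) ≤ 1 := Real.sqrt_le_one.2 (by nlinarith)
      nlinarith [Real.pi_pos]
  have h4 : Real.exp (-1) / (2 * Real.pi * h ^ 2) * Real.exp (-h ^ 2 / (1 + lam)) = Real.exp (-1) * Real.exp (-h ^ 2 / (1 + lam)) / (2 * Real.pi) * (lam - (lam - 1/h^2)) := by
    field_simp; ring
  rw [h4]
  calc _ ≤ plD h (lam - 1 / h ^ 2) * (lam - (lam - 1/h^2)) := by gcongr; linarith
    _ ≤ _ := by linarith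


/-- Mills-type bound function. -/
def ff (x : ℝ) : ℝ := Real.exp (-(x ^ 2 / 2)) / (Real.sqrt (2 * Real.pi) * x)

lemma ff_anti {x y : ℝ} (hx : 0 < x) (hxy : x ≤ y) : ff y ≤ ff x := by
  unfold ff
  have : 0 < Real.sqrt (2 * Real.pi) := Real.sqrt_pos.2 (by positivity)
  gcongr

lemma ff_nonneg {x : ℝ} (hx : 0 < x) : 0 ≤ ff x := by unfold ff; positivity

lemma stirling_nonneg (m : ℕ) : 0 ≤ Stirling.stirlingSeq m := by
  unfold Stirling.stirlingSeq; positivity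

lemma upper_tail (m k : ℕ) (hk0 : 0 < k) (hk : k < m) {p : ℝ} (h0 : 0 ≤ p) (h1 : p ≤ 1) (hp : m * p < k) :
    (∑ j ∈ Finset.Icc k m, bw m p j) ≤ Stirling.stirlingSeq m / Real.sqrt Real.pi *
      Real.sqrt (m / (m - k)) * (((k:ℝ) + 1) / k) * ff ((k - m * p) / Real.sqrt k) := by
  have hkR : (0:ℝ) < k := by exact_mod_cast hk0
  have hkm : (k:ℝ) < m := by exact_mod_cast hk
  have hsk : 0 < Real.sqrt k := Real.sqrt_pos.2 hkR
  have h2 := upper_geom m k hk.le h0 h1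
  have h3 := bw_compare_upper m k hk0 hk h0 hp
  have h4 := bw_stirling m k hk0 hk
  set T := ∑ j ∈ Finset.Icc k m, bw m p j with hT
  have hT0 : 0 ≤ T := Finset.sum_nonneg fun j _ => bw_nonneg m h0 h1 j
  have hb0 := bw_nonneg m h0 h1 k
  have hd : (0:ℝ) < k - m * p := by linarith
  have h2pi : 0 < Real.sqrt (2 * Real.pi) := Real.sqrt_pos.2 (by positivity)
  have h5 : T * (k - m * p) ≤ ((k:ℝ) + 1) * bw m p k := by
    calc T * (k - m * p) ≤ T * ((k : ℝ) + 1 - p * (m + 1)) := mul_le_mul_of_nonneg_left (by nlinarith) hT0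
      _ ≤ _ := h2
      _ ≤ ((k:ℝ) + 1) * 1 * bw m p k := by gcongr; linarith
      _ = _ := by ring
  have h6 := h3.trans (mul_le_mul_of_nonneg_right h4 (Real.exp_nonneg _))
  have h7 := h5.trans (mul_le_mul_of_nonneg_left h6 (by positivity : 0 ≤ (k:ℝ) + 1))
  rw [← le_div_iff₀ hd] at h7
  refine h7.trans (le_of_eq ?_)
  unfold ff
  have e : (((k:ℝ) - m * p) / Real.sqrt k) ^ 2 / 2 = (k - m * p) ^ 2 / (2 * k) := by
    rw [div_pow, Real.sq_sqrt hkR.le]; field_simp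
  rw [e]
  have hkk : (k:ℝ) = Real.sqrt k * Real.sqrt k := (Real.mul_self_sqrt hkR.le).symm
  generalize Real.exp (-((k - m * p) ^ 2 / (2 * k))) = E
  generalize (k:ℝ) - m * p = D at *
  generalize Real.sqrt ((m:ℝ) / (m - k)) = R
  generalize Stirling.stirlingSeq m = S
  field_simp
  rw [Real.sq_sqrt hkR.le]
  ring

lemma lower_tail (m k : ℕ) (hk0 : 0 < k) (hk : k < m) {p p0 : ℝ} (h1 : p ≤ 1) (hpp : p0 ≤ p) (hp : k < m * p0) :
    (∑ j ∈ Finset.range (k + 1), bw m p j) ≤ Stirling.stirlingSeq m / Real.sqrt Real.pi *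
      Real.sqrt (m / (m - k)) * (((m:ℝ) - k + 1) / m) * Real.sqrt (m * p0 / k) *
        ff ((m * p0 - k) / Real.sqrt (m * p0)) := by
  have hkR : (0:ℝ) < k := by exact_mod_cast hk0
  have hkm : (k:ℝ) < m := by exact_mod_cast hk
  have hm : (0:ℝ) < m := by linarith
  have hmp : (m:ℝ) * p0 ≤ m * p := by gcongr
  have h0 : 0 ≤ p := by
    by_contra h; push Not at h; nlinarith
  have hsk : 0 < Real.sqrt k := Real.sqrt_pos.2 hkR
  have h2 := lower_geom m k hk.le h0 h1
  have h3 := bw_compare_lower m k hk0 hk h1 (hp.trans_le hmp)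
  have h4 := bw_stirling m k hk0 hk
  set T := ∑ j ∈ Finset.range (k + 1), bw m p j with hT
  have hT0 : 0 ≤ T := Finset.sum_nonneg fun j _ => bw_nonneg m h0 h1 j
  have hb0 := bw_nonneg m h0 h1 k
  set u := (m:ℝ) * p with hu
  set u0 := (m:ℝ) * p0 with hu0
  have hd : (0:ℝ) < u - k := by linarith
  have hd0 : (0:ℝ) < u0 - k := by linarith
  have hu0p : 0 < u0 := by linarith
  have hup : 0 < u := by linarith
  have hsu0 : 0 < Real.sqrt u0 := Real.sqrt_pos.2 hu0p
  have h2pi : 0 < Real.sqrt (2 * Real.pi) := Real.sqrt_pos.2 (by positivity)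
  have hS := stirling_nonneg m
  have h5 : T * (u - k) ≤ (((m : ℝ) - k + 1) / m) * u * bw m p k := by
    calc T * (u - k) ≤ T * (((m : ℝ) + 1) * p - k) := mul_le_mul_of_nonneg_left (by nlinarith) hT0
      _ ≤ _ := h2
      _ = _ := by rw [hu]; field_simp
  have hmk : 0 < (m:ℝ) - k + 1 := by linarith
  have h6 := h3.trans (mul_le_mul_of_nonneg_right h4 (Real.exp_nonneg _))
  have h7 := h5.trans (mul_le_mul_of_nonneg_left h6 (by positivity : 0 ≤ (((m : ℝ) - k + 1) / m) * u))
  rw [← le_div_iff₀ hd] at h7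
  have hE : Real.exp (-((u - k) ^ 2 / (2 * u))) ≤ Real.exp (-((u0 - k) ^ 2 / (2 * u0))) := by
    apply Real.exp_le_exp.2
    apply neg_le_neg
    rw [div_le_div_iff₀ (by positivity) (by positivity)]
    have e : (u - k) ^ 2 * (2 * u0) - (u0 - k) ^ 2 * (2 * u) = 2 * (u - u0) * (u * u0 - k ^ 2) := by ring
    have : 0 ≤ u * u0 - (k:ℝ) ^ 2 := by nlinarith
    have : 0 ≤ 2 * (u - u0) * (u * u0 - (k:ℝ) ^ 2) := mul_nonneg (by linarith) this
    linarith
  have hq : u / (u - k) ≤ u0 / (u0 - k) := by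
    rw [div_le_div_iff₀ hd hd0]; nlinarith
  have h8 : T ≤ ((m : ℝ) - k + 1) / m * (Stirling.stirlingSeq m / Real.sqrt Real.pi *
      (Real.sqrt (m / (m - k)) / (Real.sqrt (2 * Real.pi) * Real.sqrt k))) * (u0 / (u0 - k) * Real.exp (-((u0 - k) ^ 2 / (2 * u0)))) := by
    calc T ≤ _ := h7
      _ = ((m : ℝ) - k + 1) / m * (Stirling.stirlingSeq m / Real.sqrt Real.pi *
      (Real.sqrt (m / (m - k)) / (Real.sqrt (2 * Real.pi) * Real.sqrt k))) * (u / (u - k) * Real.exp (-((u - k) ^ 2 / (2 * u)))) := by ring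
      _ ≤ _ := by gcongr
  refine h8.trans (le_of_eq ?_)
  unfold ff
  have e : ((u0 - k) / Real.sqrt u0) ^ 2 / 2 = (u0 - k) ^ 2 / (2 * u0) := by
    rw [div_pow, Real.sq_sqrt hu0p.le]; field_simp
  rw [e, Real.sqrt_div hu0p.le]
  generalize Real.exp (-((u0 - k) ^ 2 / (2 * u0))) = E
  generalize u0 - k = D at *
  generalize Real.sqrt ((m:ℝ) / (m - k)) = R
  generalize Stirling.stirlingSeq m = S
  field_simp
  rw [Real.sq_sqrt hu0p.le]
  ring

/-- Upper tail in terms of thresholds: `M` the real threshold, `p ≤ p0`, `m p0 < M`. -/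
lemma upper_tail' (m k : ℕ) (hk0 : 0 < k) (hk : k < m) {p p0 M : ℝ} (h0 : 0 ≤ p) (h1 : p ≤ 1)
    (hpp : p ≤ p0) (hM : m * p0 < M) (hMk : M ≤ k) :
    (∑ j ∈ Finset.Icc k m, bw m p j) ≤ Stirling.stirlingSeq m / Real.sqrt Real.pi *
      Real.sqrt (m / (m - k)) * (((k:ℝ) + 1) / k) * ff ((M - m * p0) / Real.sqrt M) := by
  have hkR : (0:ℝ) < k := by exact_mod_cast hk0
  have hmp : (m:ℝ) * p ≤ m * p0 := by gcongr
  have hkm : (k:ℝ) < m := by exact_mod_cast hk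
  refine (upper_tail m k hk0 hk h0 h1 (by linarith)).trans ?_
  have hmp0 : 0 ≤ (m:ℝ) * p := by positivity
  have hM0 : 0 < M := by linarith
  have hS := stirling_nonneg m
  have hsM : 0 < Real.sqrt M := Real.sqrt_pos.2 hM0
  have hsk : 0 < Real.sqrt k := Real.sqrt_pos.2 hkR
  have hss : Real.sqrt M ≤ Real.sqrt k := Real.sqrt_le_sqrt hMk
  have hMM := Real.mul_self_sqrt hM0.le
  have hkk := Real.mul_self_sqrt hkR.le
  apply mul_le_mul_of_nonneg_left _ (by positivity)
  apply ff_anti (div_pos (by linarith) hsM)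
  rw [div_le_div_iff₀ hsM hsk]
  generalize Real.sqrt M = a at *
  generalize Real.sqrt k = b at *
  rw [← hMM, ← hkk]
  have i1 : (a*a - m*p0) * b ≤ (a*a-m*p)*b := by gcongr
  have : 0 ≤ (b - a) * (a * b + m * p) := mul_nonneg (by linarith) (by positivity)
  nlinarith

lemma lower_tail' (m k : ℕ) (hk0 : 0 < k) (hk : k < m) {p p0 M : ℝ} (h1 : p ≤ 1) (hpp : p0 ≤ p)
    (hM : M < m * p0) (hMk : k ≤ M) :
    (∑ j ∈ Finset.range (k + 1), bw m p j) ≤ Stirling.stirlingSeq m / Real.sqrt Real.pi *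
      Real.sqrt (m / (m - k)) * (((m:ℝ) - k + 1) / m) * Real.sqrt (m * p0 / k) *
        ff ((m * p0 - M) / Real.sqrt (m * p0)) := by
  have hkR : (0:ℝ) < k := by exact_mod_cast hk0
  have hkm : (k:ℝ) < m := by exact_mod_cast hk
  refine (lower_tail m k hk0 hk h1 hpp (by linarith)).trans ?_
  have hS := stirling_nonneg m
  have hu0 : 0 < m * p0 := by linarith
  have hs : 0 < Real.sqrt (m * p0) := Real.sqrt_pos.2 hu0
  have : 0 < (m:ℝ) - k + 1 := by linarith
  apply mul_le_mul_of_nonneg_left _ (by positivity)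
  apply ff_anti (div_pos (by linarith) hs)
  gcongr


lemma hthr_sq (r : ℝ) (hr : 0 < r) (m : ℕ) : hthr r m ^ 2 = 2 * r * Real.log m := by
  unfold hthr
  rw [Real.sq_sqrt]
  have := Real.log_natCast_nonneg m
  positivity

lemma hthr_sq_tendsto (r : ℝ) (hr : 0 < r) : Tendsto (fun m : ℕ => hthr r m ^ 2) atTop atTop := by
  simp_rw [hthr_sq r hr]
  exact (Real.tendsto_log_atTop.comp tendsto_natCast_atTop_atTop).const_mul_atTop (by positivity)

lemma hthr_pos (r : ℝ) (hr : 0 < r) (m : ℕ) (hm : 2 ≤ m) : 0 < hthr r m := by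
  unfold hthr
  apply Real.sqrt_pos.2
  have : 0 < Real.log m := Real.log_pos (by exact_mod_cast (by omega : 1 < m))
  positivity

lemma exp_hthr (r : ℝ) (hr : 0 < r) (c : ℝ) (m : ℕ) (hm : 2 ≤ m) :
    Real.exp (hthr r m ^ 2 * c) = (m : ℝ) ^ (2 * r * c) := by
  rw [hthr_sq r hr, Real.rpow_def_of_pos (by positivity)]
  congr 1; ring

lemma h2_rpow_tendsto (r : ℝ) (hr : 0 < r) (s : ℝ) (hs : 0 < s) :
    Tendsto (fun m : ℕ => hthr r m ^ 2 * (m:ℝ) ^ (-s)) atTop (𝓝 0) := by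
  have h1 := (isLittleO_log_rpow_atTop hs).tendsto_div_nhds_zero
  have h2 := (h1.comp tendsto_natCast_atTop_atTop).const_mul (2 * r)
  rw [mul_zero] at h2
  refine h2.congr fun m => ?_
  rw [hthr_sq r hr, Real.rpow_neg (by positivity)]
  simp only [Function.comp]
  ring

lemma epsm_pos (r lam eta : ℝ) (hr : 0 < r) (h0 : 0 < lam) (h1 : lam < 1) (he : 0 < eta) (m : ℕ) (hm : 2 ≤ m) :
    0 < epsm r lam eta m := by
  unfold epsm
  have h := hthr_pos r hr m hm
  unfold hthr at h
  have : 0 < 1 - lam ^ 2 := by nlinarith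
  have : (0:ℝ) < m := by positivity
  positivity

lemma epsm_sq (r lam eta : ℝ) (hr : 0 < r) (h0 : 0 < lam) (h1 : lam < 1) (m : ℕ) (hm : 2 ≤ m) :
    m * epsm r lam eta m ^ 2 = 2 * Real.pi * (1 + lam) ^ 2 * Real.sqrt (1 - lam ^ 2) * eta ^ 2 / hthr r m ^ 2 *
      Real.exp (hthr r m ^ 2 / (1 + lam)) := by
  have hp : 0 < 1 - lam ^ 2 := by nlinarith
  have hm0 : (0:ℝ) < m := by positivity
  have e1 : ((1 - lam ^ 2) ^ ((1 : ℝ) / 4)) ^ 2 = Real.sqrt (1 - lam ^ 2) := by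
    rw [← Real.rpow_natCast, ← Real.rpow_mul hp.le, Real.sqrt_eq_rpow]; norm_num
  have e2 : Real.sqrt (2 * Real.pi) ^ 2 = 2 * Real.pi := Real.sq_sqrt (by positivity)
  have e3 : (m:ℝ) * ((m : ℝ) ^ (-(lam - (2 * r - 1)) / (2 * (1 + lam)))) ^ 2 = Real.exp (hthr r m ^ 2 / (1 + lam)) := by
    rw [div_eq_mul_inv (hthr r m ^ 2), exp_hthr r hr _ m hm, ← Real.rpow_natCast, ← Real.rpow_mul hm0.le]
    nth_rw 1 [← Real.rpow_one (m:ℝ)]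
    rw [← Real.rpow_add hm0]
    congr 1
    push_cast
    field_simp
    ring
  unfold epsm
  rw [← e3, ← e1]
  change (m:ℝ) * ((Real.sqrt (2 * Real.pi) * (1 + lam) * (1 - lam ^ 2) ^ ((1 : ℝ) / 4) * eta /
    hthr r m) * (m : ℝ) ^ (-(lam - (2 * r - 1)) / (2 * (1 + lam)))) ^ 2 = _
  generalize hw : Real.sqrt (2 * Real.pi) = w at *
  rw [← e2]
  ring

lemma eps_identity (r lam eta : ℝ) (hr : 0 < r) (h0 : 0 < lam) (h1 : lam < 1) (he : 0 < eta) (m : ℕ) (hm : 2 ≤ m) :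
    Real.sqrt m * epsm r lam eta m * plD (hthr r m) lam = eta * Real.sqrt (GG (hthr r m) lam) := by
  have hp : 0 < 1 - lam ^ 2 := by nlinarith
  have hh := hthr_pos r hr m hm
  have hs := Real.sqrt_pos.2 hp
  have hsq := Real.sq_sqrt hp.le
  have hG : 0 ≤ GG (hthr r m) lam := by unfold GG; positivity
  have hE := epsm_sq r lam eta hr h0 h1 m hm
  have hep := epsm_pos r lam eta hr h0 h1 he m hm
  have hee : eta * Real.sqrt (GG (hthr r m) lam) = Real.sqrt (eta ^ 2 * GG (hthr r m) lam) := by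
    rw [Real.sqrt_mul (by positivity), Real.sqrt_sq he.le]
  rw [hee]
  symm
  rw [Real.sqrt_eq_iff_mul_self_eq (by positivity) (mul_nonneg (by positivity) (plD_nonneg _ _))]
  have : Real.sqrt m * epsm r lam eta m * plD (hthr r m) lam * (Real.sqrt m * epsm r lam eta m * plD (hthr r m) lam)
     = (m * epsm r lam eta m ^ 2) * plD (hthr r m) lam ^ 2 := by
    have : (m:ℝ) = Real.sqrt m * Real.sqrt m := (Real.mul_self_sqrt (by positivity)).symm
    nth_rw 3 [this]; ring
  rw [this, hE]
  unfold plD GG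
  have hEE : Real.exp (-hthr r m ^ 2 / (1 + lam)) = (Real.exp (hthr r m ^ 2 / (1 + lam)))⁻¹ := by
    rw [← Real.exp_neg]; congr 1; ring
  rw [hEE]
  generalize hEx : Real.exp (hthr r m ^ 2 / (1 + lam)) = E
  have : 0 < E := hEx ▸ Real.exp_pos _
  generalize Real.sqrt (1 - lam ^ 2) = s at *
  field_simp
  try ring

lemma eps_h2_tendsto (r lam eta : ℝ) (hr : 0 < r) (h0 : 0 < lam) (h1 : lam < 1) (hl : 2 * r - 1 < lam) (he : 0 < eta) :
    Tendsto (fun m : ℕ => epsm r lam eta m * hthr r m ^ 2) atTop (𝓝 0) := by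
  set C := Real.sqrt (2 * Real.pi) * (1 + lam) * (1 - lam ^ 2) ^ ((1 : ℝ) / 4) * eta with hC
  have hp : 0 < 1 - lam ^ 2 := by nlinarith
  have hC0 : 0 ≤ C := by positivity
  have hk : 0 < (lam - (2 * r - 1)) / (2 * (1 + lam)) := div_pos (by linarith) (by linarith)
  have := (h2_rpow_tendsto r hr _ hk).const_mul C
  rw [mul_zero] at this
  refine squeeze_zero' ?_ ?_ this
  · filter_upwards [eventually_ge_atTop 2] with m hm
    have := epsm_pos r lam eta hr h0 h1 he m hm
    positivity
  · filter_upwards [eventually_ge_atTop 2, (hthr_sq_tendsto r hr).eventually_ge_atTop 1] with m hm hh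
    have hh0 := hthr_pos r hr m hm
    have hh1 : 1 ≤ hthr r m := by nlinarith
    have e : epsm r lam eta m * hthr r m ^ 2 = C / hthr r m * (m:ℝ) ^ (-((lam - (2 * r - 1)) / (2 * (1 + lam)))) * hthr r m ^ 2 := by
      unfold epsm; rw [neg_div]; rfl
    rw [e]
    have : C / hthr r m ≤ C := div_le_self hC0 hh1
    calc _ ≤ C * (m:ℝ) ^ (-((lam - (2 * r - 1)) / (2 * (1 + lam)))) * hthr r m ^ 2 := by gcongr
      _ = _ := by ring

lemma eps_tendsto (r lam eta : ℝ) (hr : 0 < r) (h0 : 0 < lam) (h1 : lam < 1) (hl : 2 * r - 1 < lam) (he : 0 < eta) :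
    Tendsto (fun m : ℕ => epsm r lam eta m) atTop (𝓝 0) := by
  refine squeeze_zero' ?_ ?_ (eps_h2_tendsto r lam eta hr h0 h1 hl he)
  · filter_upwards [eventually_ge_atTop 2] with m hm
    exact (epsm_pos r lam eta hr h0 h1 he m hm).le
  · filter_upwards [eventually_ge_atTop 2, (hthr_sq_tendsto r hr).eventually_ge_atTop 1] with m hm hh
    have := epsm_pos r lam eta hr h0 h1 he m hm
    nlinarith

lemma exp_ratio (lam : ℝ) (h0 : 0 < lam) (hs t : ℕ → ℝ) (ht : Tendsto t atTop (𝓝 0))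
    (ht2 : Tendsto (fun m => t m * hs m ^ 2) atTop (𝓝 0)) :
    Tendsto (fun m => Real.exp (-hs m ^ 2 / (1 + (lam + t m))) / Real.exp (-hs m ^ 2 / (1 + lam))) atTop (𝓝 1) := by
  have h1 : Tendsto (fun m => (t m * hs m ^ 2) / ((1 + (lam + t m)) * (1 + lam))) atTop (𝓝 (0 / ((1 + (lam + 0)) * (1 + lam)))) := by
    apply ht2.div (((ht.const_add lam).const_add 1).mul_const _)
    positivity
  rw [zero_div] at h1
  have h2 := (Real.continuous_exp.tendsto 0).comp h1
  rw [Real.exp_zero] at h2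
  refine h2.congr' ?_
  have : ∀ᶠ m in atTop, -lam < t m := ht.eventually_const_lt (by linarith)
  filter_upwards [this] with m hm
  simp only [Function.comp]
  rw [← Real.exp_sub]
  congr 1
  have : 1 + (lam + t m) ≠ 0 := by linarith
  have : 1 + lam ≠ 0 := by linarith
  field_simp
  ring

lemma sqrt_ratio (lam : ℝ) (h0 : 0 < lam) (h1 : lam < 1) (t : ℕ → ℝ) (ht : Tendsto t atTop (𝓝 0)) :
    Tendsto (fun m => Real.sqrt (1 - lam ^ 2) / Real.sqrt (1 - (lam + t m) ^ 2)) atTop (𝓝 1) := by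
  have hp : 0 < 1 - lam ^ 2 := by nlinarith
  have hs := Real.sqrt_pos.2 hp
  have a : Tendsto (fun m => Real.sqrt (1 - (lam + t m) ^ 2)) atTop (𝓝 (Real.sqrt (1 - (lam + 0) ^ 2))) :=
    (((ht.const_add lam).pow 2).const_sub 1).sqrt
  rw [add_zero] at a
  have := (tendsto_const_nhds (x := Real.sqrt (1 - lam ^ 2))).div a hs.ne'
  rwa [div_self hs.ne'] at this

lemma plD_ratio (lam : ℝ) (h0 : 0 < lam) (h1 : lam < 1) (hs t : ℕ → ℝ) (ht : Tendsto t atTop (𝓝 0))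
    (ht2 : Tendsto (fun m => t m * hs m ^ 2) atTop (𝓝 0)) :
    Tendsto (fun m => plD (hs m) (lam + t m) / plD (hs m) lam) atTop (𝓝 1) := by
  have := (exp_ratio lam h0 hs t ht ht2).mul (sqrt_ratio lam h0 h1 t ht)
  rw [mul_one] at this
  refine this.congr fun m => ?_
  unfold plD
  have hp : 0 < 1 - lam ^ 2 := by nlinarith
  have hs := Real.sqrt_pos.2 hp
  field_simp

lemma GG_ratio (lam : ℝ) (h0 : 0 < lam) (h1 : lam < 1) (hs t : ℕ → ℝ) (ht : Tendsto t atTop (𝓝 0))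
    (ht2 : Tendsto (fun m => t m * hs m ^ 2) atTop (𝓝 0)) (hs0 : ∀ᶠ m in atTop, 0 < hs m) :
    Tendsto (fun m => GG (hs m) (lam + t m) / GG (hs m) lam) atTop (𝓝 1) := by
  have a : Tendsto (fun m => (1 + (lam + t m)) ^ 2 / (1 + lam) ^ 2) atTop (𝓝 ((1 + (lam + 0)) ^ 2 / (1 + lam) ^ 2)) :=
    (((ht.const_add lam).const_add 1).pow 2).div_const _
  rw [add_zero, div_self (by positivity)] at a
  have := ((exp_ratio lam h0 hs t ht ht2).mul (sqrt_ratio lam h0 h1 t ht)).mul a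
  rw [mul_one, mul_one] at this
  refine this.congr' ?_
  filter_upwards [hs0] with m hm
  unfold GG
  have hp : 0 < 1 - lam ^ 2 := by nlinarith
  have hs := Real.sqrt_pos.2 hp
  field_simp

lemma mmu_tendsto (r lam : ℝ) (hr : 0 < r) (h0 : 0 < lam) (h1 : lam < 1) (hl : 2 * r - 1 < lam) :
    Tendsto (fun m : ℕ => (m:ℝ) * muM r m lam) atTop atTop := by
  have hk : 0 < (lam - (2 * r - 1)) / (1 + lam) := div_pos (by linarith) (by linarith)
  have a := h2_rpow_tendsto r hr _ hk
  have a' : Tendsto (fun m : ℕ => hthr r m ^ 2 * (m:ℝ) ^ (-((lam - (2 * r - 1)) / (1 + lam)))) atTop (𝓝[>] 0) := by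
    rw [tendsto_nhdsWithin_iff]
    refine ⟨a, ?_⟩
    filter_upwards [eventually_ge_atTop 2] with m hm
    have := hthr_pos r hr m hm
    have : (0:ℝ) < m := by positivity
    simp only [Set.mem_Ioi]
    positivity
  have b := (tendsto_inv_nhdsGT_zero.comp a').const_mul_atTop (by positivity : 0 < Real.exp (-1) / (2 * Real.pi))
  refine tendsto_atTop_mono' _ ?_ b
  filter_upwards [eventually_ge_atTop 2, ((hthr_sq_tendsto r hr).const_mul_atTop h0).eventually_ge_atTop 1] with m hm hh
  have hh0 := hthr_pos r hr m hm
  have hm0 : (0:ℝ) < m := by positivity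
  have c := mu_lower (hthr r m) lam hh0 h0 h1 hh
  have := mul_le_mul_of_nonneg_left c hm0.le
  refine le_trans (le_of_eq ?_) this
  have e : -hthr r m ^ 2 / (1 + lam) = hthr r m ^ 2 * (-(1 + lam)⁻¹) := by ring
  have e3 : (m:ℝ) * Real.exp (-hthr r m ^ 2 / (1 + lam)) = ((m : ℝ) ^ (-((lam - (2 * r - 1)) / (1 + lam))))⁻¹ := by
    rw [e, exp_hthr r hr _ m hm, ← Real.rpow_neg hm0.le]
    nth_rw 1 [← Real.rpow_one (m:ℝ)]
    rw [← Real.rpow_add hm0]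
    congr 1
    field_simp
    ring
  simp only [Function.comp]
  rw [mul_inv, ← e3]
  field_simp

lemma mu_tendsto_zero (r lam : ℝ) (hr : 0 < r) (h0 : 0 < lam) (h1 : lam < 1) :
    Tendsto (fun m : ℕ => muM r m lam) atTop (𝓝 0) := by
  have hp : 0 < 1 - lam ^ 2 := by nlinarith
  have hs := Real.sqrt_pos.2 hp
  have a := (tendsto_inv_atTop_zero.comp (hthr_sq_tendsto r hr)).const_mul ((1 + lam) ^ 2 / (2 * Real.pi * Real.sqrt (1 - lam ^ 2)))
  rw [mul_zero] at a
  refine squeeze_zero' (Eventually.of_forall fun m => mu_nonneg _ _) ?_ a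
  filter_upwards [eventually_ge_atTop 2] with m hm
  have hh := hthr_pos r hr m hm
  refine (mu_le_GG _ _ hh (by linarith) h1).trans ?_
  unfold GG
  have : Real.exp (-hthr r m ^ 2 / (1 + lam)) ≤ 1 := by
    apply Real.exp_le_one_iff.2
    rw [neg_div]
    have : 0 ≤ hthr r m ^ 2 / (1 + lam) := by positivity
    linarith
  calc _ ≤ (1 + lam) ^ 2 / (2 * Real.pi * hthr r m ^ 2 * Real.sqrt (1 - lam ^ 2)) * 1 := by gcongr
    _ = _ := by simp only [Function.comp]; field_simp


lemma plD_pos (h t : ℝ) (h0 : -1 < t) (h1 : t < 1) : 0 < plD h t := by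
  unfold plD
  have hp : 0 < 1 - t ^ 2 := by nlinarith
  have := Real.sqrt_pos.2 hp
  positivity

lemma GG_pos (h t : ℝ) (hh : 0 < h) (h0 : -1 < t) (h1 : t < 1) : 0 < GG h t := by
  unfold GG
  have hp : 0 < 1 - t ^ 2 := by nlinarith
  have := Real.sqrt_pos.2 hp
  have : 0 < 1 + t := by linarith
  positivity

/-- scaled difference bound -/
lemma scaled_diff (m : ℕ) (hm : 0 < m) (D P G mu1 : ℝ) (hP : 0 ≤ P) (hD : P ≤ D) (hG : mu1 ≤ G) (hmu : 0 < mu1) :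
    Real.sqrt m * P / Real.sqrt G ≤ (m * D) / Real.sqrt (m * mu1) := by
  have hm0 : (0:ℝ) < m := by exact_mod_cast hm
  have hs := Real.sqrt_pos.2 hm0
  have e : (m * D) / Real.sqrt (m * mu1) = Real.sqrt m * D / Real.sqrt mu1 := by
    rw [Real.sqrt_mul hm0.le]
    have := Real.sqrt_pos.2 hmu
    have h2 : (m:ℝ) = Real.sqrt m * Real.sqrt m := (Real.mul_self_sqrt hm0.le).symm
    nth_rw 1 [h2]
    field_simp
  rw [e]
  have := Real.sqrt_pos.2 hmu
  have h3 := Real.sqrt_le_sqrt hG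
  have : 0 ≤ D := by linarith
  gcongr

section
variable (r lam eta : ℝ)

lemma x1_lower (hr : 0 < r) (h0 : 0 < lam) (h1 : lam < 1) (he : 0 < eta)
    (m : ℕ) (hm : 2 ≤ m) (hel : epsm r lam eta m < lam) (hmu : 0 < muM r m lam) :
    eta * (plD (hthr r m) (lam + -epsm r lam eta m) / plD (hthr r m) lam) ≤
      (m * muM r m lam - m * muM r m (lam - epsm r lam eta m)) / Real.sqrt (m * muM r m lam) := by
  have hh := hthr_pos r hr m hm
  have hep := epsm_pos r lam eta hr h0 h1 he m hm
  have hid := eps_identity r lam eta hr h0 h1 he m hm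
  have hdiff := mu_diff_ge (hthr r m) (lam - epsm r lam eta m) lam hh (by linarith) (by linarith) h1
  have hGG := mu_le_GG (hthr r m) lam hh (by linarith) h1
  have hD := plD_pos (hthr r m) lam (by linarith) h1
  have hG := Real.sqrt_pos.2 (GG_pos (hthr r m) lam hh (by linarith) h1)
  have := scaled_diff m (by omega) _ _ _ _ (mul_nonneg (plD_nonneg _ _) (by linarith)) hdiff hGG hmu
  rw [← mul_sub]
  refine le_trans (le_of_eq ?_) this
  rw [← sub_eq_add_neg]
  field_simp
  linear_combination (-plD (hthr r m) (lam - epsm r lam eta m)) * hid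

lemma x2_lower (hr : 0 < r) (h0 : 0 < lam) (h1 : lam < 1) (he : 0 < eta)
    (m : ℕ) (hm : 2 ≤ m) (hel : lam + epsm r lam eta m < 1) (hmu : 0 < muM r m lam) :
    eta * Real.sqrt (GG (hthr r m) lam / GG (hthr r m) (lam + epsm r lam eta m)) ≤
      (m * muM r m (lam + epsm r lam eta m) - m * muM r m lam) / Real.sqrt (m * muM r m (lam + epsm r lam eta m)) := by
  have hh := hthr_pos r hr m hm
  have hep := epsm_pos r lam eta hr h0 h1 he m hm
  have hid := eps_identity r lam eta hr h0 h1 he m hm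
  have hdiff := mu_diff_ge (hthr r m) lam (lam + epsm r lam eta m) hh (by linarith) (by linarith) hel
  have hGG := mu_le_GG (hthr r m) (lam + epsm r lam eta m) hh (by linarith) hel
  have hG' := GG_pos (hthr r m) lam hh (by linarith) h1
  have hG := Real.sqrt_pos.2 (GG_pos (hthr r m) (lam + epsm r lam eta m) hh (by linarith) hel)
  have hmon : muM r m lam ≤ muM r m (lam + epsm r lam eta m) :=
    mu_mono _ _ _ hh (by linarith) (by linarith) hel.le
  have := scaled_diff m (by omega) _ _ _ _ (mul_nonneg (plD_nonneg _ _) (by linarith)) hdiff hGG (hmu.trans_le hmon)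
  rw [← mul_sub]
  refine le_trans (le_of_eq ?_) this
  rw [Real.sqrt_div hG'.le]
  field_simp
  linear_combination (-1 : ℝ) * hid

lemma mu_ratio (hr : 0 < r) (h0 : 0 < lam) (h1 : lam < 1) (hl : 2 * r - 1 < lam) (he : 0 < eta) :
    Tendsto (fun m : ℕ => muM r m (lam + epsm r lam eta m) / muM r m lam) atTop (𝓝 1) := by
  have hp : 0 < 1 - lam ^ 2 := by nlinarith
  have hs := Real.sqrt_pos.2 hp
  have t1 := eps_tendsto r lam eta hr h0 h1 hl he
  have t2 := eps_h2_tendsto r lam eta hr h0 h1 hl he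
  have a := ((plD_ratio lam h0 h1 (hthr r) (epsm r lam eta) t1 t2).mul t2).mul_const (Real.exp 1 / Real.sqrt (1 - lam ^ 2))
  have a' := a.const_add 1
  simp only [mul_zero, zero_mul, add_zero] at a'
  have ev1 : ∀ᶠ m in atTop, epsm r lam eta m < 1 - lam := t1.eventually_lt_const (by linarith)
  have ev2 := (mmu_tendsto r lam hr h0 h1 hl).eventually_gt_atTop 0
  refine tendsto_of_tendsto_of_tendsto_of_le_of_le' tendsto_const_nhds a' ?_ ?_
  · filter_upwards [eventually_ge_atTop 2, ev1, ev2] with m hm hel hM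
    have hmu : 0 < muM r m lam := pos_of_mul_pos_right hM (by positivity)
    rw [le_div_iff₀ hmu, one_mul]
    have hep := epsm_pos r lam eta hr h0 h1 he m hm
    exact mu_mono _ _ _ (hthr_pos r hr m hm) (by linarith) (by linarith) (by linarith)
  · filter_upwards [eventually_ge_atTop 2, ev1, ev2, ((hthr_sq_tendsto r hr).const_mul_atTop h0).eventually_ge_atTop 1] with m hm hel hM hh2
    have hmu : 0 < muM r m lam := pos_of_mul_pos_right hM (by positivity)
    have hh := hthr_pos r hr m hm
    have hep := epsm_pos r lam eta hr h0 h1 he m hm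
    have hlow := mu_lower (hthr r m) lam hh h0 h1 hh2
    have hdiff := mu_diff_le (hthr r m) lam (lam + epsm r lam eta m) hh (by linarith) (by linarith) (by linarith)
    have hD := plD_pos (hthr r m) lam (by linarith) h1
    have hD' := plD_nonneg (hthr r m) (lam + epsm r lam eta m)
    rw [div_le_iff₀ hmu]
    have key : plD (hthr r m) lam ≤ hthr r m ^ 2 * (Real.exp 1 / Real.sqrt (1 - lam ^ 2)) * muM r m lam := by
      calc plD (hthr r m) lam = hthr r m ^ 2 * (Real.exp 1 / Real.sqrt (1 - lam ^ 2)) * (Real.exp (-1) / (2 * Real.pi * hthr r m ^ 2) * Real.exp (-hthr r m ^ 2 / (1 + lam))) := by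
            unfold plD
            rw [Real.exp_neg 1]
            field_simp
        _ ≤ _ := by
          apply mul_le_mul_of_nonneg_left hlow (by positivity)
    have key2 : plD (hthr r m) (lam + epsm r lam eta m) * epsm r lam eta m ≤ 
       plD (hthr r m) (lam + epsm r lam eta m) / plD (hthr r m) lam * (epsm r lam eta m * hthr r m ^ 2) * (Real.exp 1 / Real.sqrt (1 - lam ^ 2)) * muM r m lam := by
      calc plD (hthr r m) (lam + epsm r lam eta m) * epsm r lam eta m = plD (hthr r m) (lam + epsm r lam eta m) / plD (hthr r m) lam * epsm r lam eta m * plD (hthr r m) lam := by field_simp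
        _ ≤ plD (hthr r m) (lam + epsm r lam eta m) / plD (hthr r m) lam * epsm r lam eta m * (hthr r m ^ 2 * (Real.exp 1 / Real.sqrt (1 - lam ^ 2)) * muM r m lam) := by
          apply mul_le_mul_of_nonneg_left key (by positivity)
        _ = _ := by ring
    have e : muM r m (lam + epsm r lam eta m) - muM r m lam ≤ plD (hthr r m) (lam + epsm r lam eta m) * epsm r lam eta m := by
      refine hdiff.trans (le_of_eq ?_); ring
    rw [add_mul, one_mul]
    linarith

lemma ff_tendsto {a : ℕ → ℝ} {x : ℝ} (hx : 0 < x) (h : Tendsto a atTop (𝓝 x)) :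
    Tendsto (fun m => ff (a m)) atTop (𝓝 (ff x)) := by
  unfold ff
  have : 0 < Real.sqrt (2 * Real.pi) := Real.sqrt_pos.2 (by positivity)
  exact ((((h.pow 2).div_const 2).neg).rexp).div (h.const_mul _) (by positivity)

/-- thresholds -/
def kk (m : ℕ) : ℕ := ⌈(m:ℝ) * muM r m lam⌉₊

lemma tendsto_kdiv (hr : 0 < r) (h0 : 0 < lam) (h1 : lam < 1) :
    Tendsto (fun m : ℕ => (kk r lam m : ℝ) / m) atTop (𝓝 0) := by
  have a := (mu_tendsto_zero r lam hr h0 h1).add (tendsto_inv_atTop_nhds_zero_nat (𝕜 := ℝ))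
  rw [add_zero] at a
  refine squeeze_zero' (Eventually.of_forall fun m => by positivity) ?_ a
  filter_upwards [eventually_ge_atTop 2] with m hm
  have hm0 : (0:ℝ) < m := by positivity
  rw [div_le_iff₀ hm0]
  have : (kk r lam m : ℝ) < m * muM r m lam + 1 := Nat.ceil_lt_add_one (by have := mu_nonneg lam (hthr r m); unfold muM; positivity)
  have e : (muM r m lam + (m:ℝ)⁻¹) * m = m * muM r m lam + 1 := by field_simp
  linarith

lemma tendsto_k (hr : 0 < r) (h0 : 0 < lam) (h1 : lam < 1) (hl : 2 * r - 1 < lam) :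
    Tendsto (fun m : ℕ => (kk r lam m : ℝ)) atTop atTop :=
  tendsto_atTop_mono (fun m => Nat.le_ceil _) (mmu_tendsto r lam hr h0 h1 hl)

/-- First bound -/
def B1 (m : ℕ) : ℝ := Stirling.stirlingSeq m / Real.sqrt Real.pi *
      Real.sqrt (m / (m - kk r lam m)) * (((kk r lam m:ℝ) + 1) / kk r lam m) *
      ff (eta * (plD (hthr r m) (lam + -epsm r lam eta m) / plD (hthr r m) lam))

/-- Second bound -/
def B2 (m : ℕ) : ℝ := Stirling.stirlingSeq m / Real.sqrt Real.pi *
      Real.sqrt (m / (m - (kk r lam m - 1 : ℕ))) * (((m:ℝ) - (kk r lam m - 1 : ℕ) + 1) / m) *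
      Real.sqrt (m * muM r m (lam + epsm r lam eta m) / (kk r lam m - 1 : ℕ)) *
      ff (eta * Real.sqrt (GG (hthr r m) lam / GG (hthr r m) (lam + epsm r lam eta m)))

lemma S_tendsto : Tendsto (fun m => Stirling.stirlingSeq m / Real.sqrt Real.pi) atTop (𝓝 1) := by
  have := Stirling.tendsto_stirlingSeq_sqrt_pi.div_const (Real.sqrt Real.pi)
  rwa [div_self (by positivity)] at this

lemma sqrt_frac_tendsto (k : ℕ → ℕ) (h : Tendsto (fun m : ℕ => (k m : ℝ) / m) atTop (𝓝 0)) :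
    Tendsto (fun m : ℕ => Real.sqrt ((m:ℝ) / (m - k m))) atTop (𝓝 1) := by
  have a := ((h.const_sub 1).inv₀ (by norm_num)).sqrt
  simp only [sub_zero, inv_one, Real.sqrt_one] at a
  refine a.congr' ?_
  filter_upwards [eventually_ge_atTop 2] with m hm
  have hm0 : (0:ℝ) < m := by positivity
  congr 1
  have : 1 - (k m : ℝ) / m = (m - k m) / m := by field_simp
  rw [this, inv_div]

lemma B1_tendsto (hr : 0 < r) (h0 : 0 < lam) (h1 : lam < 1) (hl : 2 * r - 1 < lam) (he : 0 < eta) :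
    Tendsto (B1 r lam eta) atTop (𝓝 (ff eta)) := by
  have t1 := (eps_tendsto r lam eta hr h0 h1 hl he).neg
  have t2 := (eps_h2_tendsto r lam eta hr h0 h1 hl he).neg
  rw [neg_zero] at t1 t2
  have a1 := plD_ratio lam h0 h1 (hthr r) (fun m => -epsm r lam eta m) t1 (t2.congr fun m => by ring)
  have a2 := a1.const_mul eta
  rw [mul_one] at a2
  have a3 : Tendsto (fun m => ((kk r lam m:ℝ) + 1) / kk r lam m) atTop (𝓝 1) := by
    have tk := tendsto_k r lam hr h0 h1 hl
    have := (tendsto_inv_atTop_zero.comp tk).const_add 1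
    rw [add_zero] at this
    refine this.congr' ?_
    filter_upwards [tk.eventually_gt_atTop 0] with m hm
    simp only [Function.comp]
    field_simp
  have := ((S_tendsto.mul (sqrt_frac_tendsto _ (tendsto_kdiv r lam hr h0 h1))).mul a3).mul (ff_tendsto he a2)
  simp only [one_mul] at this
  exact this

lemma B2_tendsto (hr : 0 < r) (h0 : 0 < lam) (h1 : lam < 1) (hl : 2 * r - 1 < lam) (he : 0 < eta) :
    Tendsto (B2 r lam eta) atTop (𝓝 (ff eta)) := by
  have t1 := (eps_tendsto r lam eta hr h0 h1 hl he)
  have t2 := (eps_h2_tendsto r lam eta hr h0 h1 hl he)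
  have tM := mmu_tendsto r lam hr h0 h1 hl
  have hpos : ∀ᶠ m in atTop, 0 < hthr r m := by
    filter_upwards [eventually_ge_atTop 2] with m hm using hthr_pos r hr m hm
  have a1 := (GG_ratio lam h0 h1 (hthr r) (epsm r lam eta) t1 t2 hpos).inv₀ one_ne_zero
  have a2 := a1.sqrt.const_mul eta
  simp only [inv_one, Real.sqrt_one, mul_one, inv_div] at a2
  have tk0 : Tendsto (fun m : ℕ => ((kk r lam m - 1 : ℕ) : ℝ) / m) atTop (𝓝 0) := by
    refine squeeze_zero (fun m => by positivity) (fun m => ?_) (tendsto_kdiv r lam hr h0 h1)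
    gcongr
    omega
  have tm : Tendsto (fun m : ℕ => ((m:ℝ) - (kk r lam m - 1 : ℕ) + 1) / m) atTop (𝓝 1) := by
    have := (tk0.const_sub 1).add (tendsto_inv_atTop_nhds_zero_nat (𝕜 := ℝ))
    simp only [sub_zero, add_zero] at this
    refine this.congr' ?_
    filter_upwards [eventually_ge_atTop 2] with m hm
    have hm0 : (0:ℝ) < m := by positivity
    field_simp
  have hkb : ∀ m : ℕ, (m:ℝ) * muM r m lam - 1 ≤ ((kk r lam m - 1 : ℕ) : ℝ) := by
    intro m
    have : (m:ℝ) * muM r m lam ≤ kk r lam m := Nat.le_ceil _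
    have h2 : (kk r lam m : ℝ) ≤ ((kk r lam m - 1 : ℕ) : ℝ) + 1 := by
      exact_mod_cast (by omega : kk r lam m ≤ (kk r lam m - 1) + 1)
    linarith
  have tr : Tendsto (fun m : ℕ => (m:ℝ) * muM r m lam / ((kk r lam m - 1 : ℕ) : ℝ)) atTop (𝓝 1) := by
    have b : Tendsto (fun m : ℕ => (1 - ((m:ℝ) * muM r m lam)⁻¹)⁻¹) atTop (𝓝 1) := by
      have := ((tendsto_inv_atTop_zero.comp tM).const_sub 1).inv₀ (by norm_num)
      simpa using this
    refine tendsto_of_tendsto_of_tendsto_of_le_of_le' tendsto_const_nhds b ?_ ?_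
    · filter_upwards [tM.eventually_gt_atTop 1] with m hm
      have := hkb m
      have hlt : (kk r lam m : ℝ) < m * muM r m lam + 1 := Nat.ceil_lt_add_one (by linarith)
      have hk1 : (1:ℝ) < kk r lam m := hm.trans_le (Nat.le_ceil _)
      have hk1' : 1 < kk r lam m := by exact_mod_cast hk1
      rw [le_div_iff₀ (by linarith), one_mul, Nat.cast_sub hk1'.le]
      push_cast
      linarith
    · filter_upwards [tM.eventually_gt_atTop 1] with m hm
      have := hkb m
      have e : (1 - ((m:ℝ) * muM r m lam)⁻¹)⁻¹ = ((m:ℝ) * muM r m lam) / ((m:ℝ) * muM r m lam - 1) := by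
        have : (m:ℝ) * muM r m lam - 1 ≠ 0 := by linarith
        generalize (m:ℝ) * muM r m lam = M at *
        have : M ≠ 0 := by linarith
        have : 1 - M⁻¹ = (M - 1) / M := by field_simp
        rw [this, inv_div]
      rw [e]
      apply div_le_div_of_nonneg_left (by linarith) (by linarith) this
  have tr2 := ((mu_ratio r lam eta hr h0 h1 hl he).mul tr).sqrt
  rw [mul_one, Real.sqrt_one] at tr2
  have tr3 : Tendsto (fun m : ℕ => Real.sqrt (m * muM r m (lam + epsm r lam eta m) / (kk r lam m - 1 : ℕ))) atTop (𝓝 1) := by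
    refine tr2.congr' ?_
    filter_upwards [tM.eventually_gt_atTop 0] with m hM
    have hmu : 0 < muM r m lam := pos_of_mul_pos_right hM (by positivity)
    congr 1
    field_simp
  have := (((S_tendsto.mul (sqrt_frac_tendsto _ tk0)).mul tm).mul tr3).mul (ff_tendsto he a2)
  simp only [one_mul] at this
  exact this

lemma tail_bounds (hr : 0 < r) (h0 : 0 < lam) (h1 : lam < 1) (hl : 2 * r - 1 < lam) (he : 0 < eta) :
    ∀ᶠ m : ℕ in atTop, 2 ≤ m ∧ 0 ≤ B1 r lam eta m ∧ 0 ≤ B2 r lam eta m ∧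
      epsm r lam eta m < lam ∧ lam + epsm r lam eta m < 1 ∧
      (∀ p, 0 ≤ p → p ≤ 1 → p ≤ muM r m (lam - epsm r lam eta m) →
        ∑ j ∈ Finset.Icc (kk r lam m) m, bw m p j ≤ B1 r lam eta m) ∧
      (∀ p, p ≤ 1 → muM r m (lam + epsm r lam eta m) ≤ p →
        ∑ j ∈ Finset.range (kk r lam m), bw m p j ≤ B2 r lam eta m) := by
  have t1 := eps_tendsto r lam eta hr h0 h1 hl he
  have tM := mmu_tendsto r lam hr h0 h1 hl
  have ev1 : ∀ᶠ m in atTop, epsm r lam eta m < 1 - lam := t1.eventually_lt_const (by linarith)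
  have ev2 : ∀ᶠ m in atTop, epsm r lam eta m < lam := t1.eventually_lt_const (by linarith)
  have ev3 : ∀ᶠ m : ℕ in atTop, (kk r lam m : ℝ) / m < 1 :=
    (tendsto_kdiv r lam hr h0 h1).eventually_lt_const (by linarith)
  have hff : 0 < ff eta := by
    unfold ff
    have : 0 < Real.sqrt (2 * Real.pi) := Real.sqrt_pos.2 (by positivity)
    positivity
  have p1 := (B1_tendsto r lam eta hr h0 h1 hl he).eventually_const_lt hff
  have p2 := (B2_tendsto r lam eta hr h0 h1 hl he).eventually_const_lt hff
  filter_upwards [eventually_ge_atTop 2, ev1, ev2, ev3, tM.eventually_gt_atTop 2, p1, p2] with m hm hel1 hel2 hk hM hp1 hp2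
  have hm0 : (0:ℝ) < m := by positivity
  have hkmR : (kk r lam m : ℝ) < m := by rwa [div_lt_one hm0] at hk
  have hkm : kk r lam m < m := by exact_mod_cast hkmR
  have hMk : (m:ℝ) * muM r m lam ≤ kk r lam m := Nat.le_ceil _
  have hk2 : 2 < kk r lam m := by exact_mod_cast hM.trans_le hMk
  have hmu : 0 < muM r m lam := pos_of_mul_pos_right (by linarith) hm0.le
  have hh := hthr_pos r hr m hm
  have hep := epsm_pos r lam eta hr h0 h1 he m hm
  have hD := plD_pos (hthr r m) lam (by linarith) h1
  have hD' := plD_pos (hthr r m) (lam + -epsm r lam eta m) (by linarith) (by linarith)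
  have hG := GG_pos (hthr r m) lam hh (by linarith) h1
  have hG' := GG_pos (hthr r m) (lam + epsm r lam eta m) hh (by linarith) (by linarith)
  have x1 := x1_lower r lam eta hr h0 h1 he m hm hel2 hmu
  have x2 := x2_lower r lam eta hr h0 h1 he m hm (by linarith) hmu
  have y1 : 0 < eta * (plD (hthr r m) (lam + -epsm r lam eta m) / plD (hthr r m) lam) := by positivity
  have y2 : 0 < eta * Real.sqrt (GG (hthr r m) lam / GG (hthr r m) (lam + epsm r lam eta m)) := by positivity
  have hS := stirling_nonneg m
  refine ⟨hm, hp1.le, hp2.le, hel2, by linarith, ?_, ?_⟩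
  · intro p hp0 hp1 hpp
    have hlt : (m:ℝ) * muM r m (lam - epsm r lam eta m) < m * muM r m lam := by
      by_contra hc
      push Not at hc
      have := div_nonpos_of_nonpos_of_nonneg (by linarith : m * muM r m lam - m * muM r m (lam - epsm r lam eta m) ≤ 0)
        (Real.sqrt_nonneg (m * muM r m lam))
      linarith
    refine (upper_tail' m (kk r lam m) (by omega) hkm hp0 hp1 hpp hlt hMk).trans ?_
    unfold B1
    exact mul_le_mul_of_nonneg_left (ff_anti y1 x1) (by positivity)
  · intro p hp1 hpp
    have hlt : (m:ℝ) * muM r m lam < m * muM r m (lam + epsm r lam eta m) := by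
      by_contra hc
      push Not at hc
      have := div_nonpos_of_nonpos_of_nonneg (by linarith : m * muM r m (lam + epsm r lam eta m) - m * muM r m lam ≤ 0)
        (Real.sqrt_nonneg (m * muM r m (lam + epsm r lam eta m)))
      linarith
    have hk1 : kk r lam m - 1 + 1 = kk r lam m := by omega
    have hlt2 : (kk r lam m : ℝ) < m * muM r m lam + 1 := Nat.ceil_lt_add_one (by linarith)
    have hle : ((kk r lam m - 1 : ℕ) : ℝ) ≤ m * muM r m lam := by
      rw [Nat.cast_sub (by omega)]; push_cast; linarith
    have := lower_tail' m (kk r lam m - 1) (by omega) (by omega) hp1 hpp hlt hle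
    rw [hk1] at this
    refine this.trans ?_
    unfold B2
    have : 0 < (m:ℝ) - (kk r lam m - 1 : ℕ) + 1 := by
      rw [Nat.cast_sub (by omega)]; push_cast; linarith
    exact mul_le_mul_of_nonneg_left (ff_anti y2 x2) (by positivity)

end


lemma int_ite {Ω : Type*} [MeasurableSpace Ω] (P : Measure Ω) [IsProbabilityMeasure P] (c : Prop) (E : Ω → Prop)
    [∀ ω, Decidable (c ∧ E ω)] (hE : MeasurableSet {ω | E ω}) :
    Integrable (fun ω => if c ∧ E ω then (1:ℝ) else 0) P ∧
      (c → ∫ ω, (if c ∧ E ω then (1:ℝ) else 0) ∂P = P.real {ω | E ω}) ∧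
      (¬ c → ∫ ω, (if c ∧ E ω then (1:ℝ) else 0) ∂P = 0) := by
  classical
  by_cases hc : c
  · have e : (fun ω => if c ∧ E ω then (1:ℝ) else 0) = Set.indicator {ω | E ω} 1 := by
      ext ω
      simp [Set.indicator_apply, hc]
    refine ⟨?_, fun _ => ?_, fun h => absurd hc h⟩
    · rw [e]; exact (integrable_const (1:ℝ)).indicator hE
    · rw [e, integral_indicator_one hE]
  · have e : (fun ω => if c ∧ E ω then (1:ℝ) else 0) = fun _ => 0 := by
      ext ω
      simp [hc]
    refine ⟨?_, fun h => absurd h hc, fun _ => ?_⟩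
    · rw [e]; exact integrable_const 0
    · rw [e]; simp

instance Prob_prob (d m : ℕ) : IsProbabilityMeasure (Prob d m) := by unfold Prob; infer_instance

lemma dotp_measurable {d : ℕ} (x : Fin d → ℝ) : Measurable (fun a : Fin d → ℝ => dotp a x) := by
  unfold dotp; fun_prop

/-- the joint activation set -/
def AA {d : ℕ} (h : ℝ) (x y : Fin d → ℝ) : Set (Fin d → ℝ) := {a | h ≤ dotp a x ∧ h ≤ dotp a y}

lemma AA_meas {d : ℕ} (h : ℝ) (x y : Fin d → ℝ) : MeasurableSet (AA h x y) :=
  (measurableSet_le measurable_const (dotp_measurable x)).inter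
    (measurableSet_le measurable_const (dotp_measurable y))

lemma score_measurable (d m : ℕ) (r : ℝ) (x y : Fin d → ℝ) : Measurable (score d m r x y) := by
  unfold score
  refine Measurable.const_mul (Finset.measurable_sum _ fun i _ => ?_) _
  refine Measurable.mul ?_ ?_
  · exact Measurable.ite (measurableSet_le measurable_const ((dotp_measurable x).comp (measurable_pi_apply i)))
      measurable_const measurable_const
  · exact Measurable.ite (measurableSet_le measurable_const ((dotp_measurable y).comp (measurable_pi_apply i)))
      measurable_const measurable_const

open Classical in
lemma score_eq (d m : ℕ) (r : ℝ) (x y : Fin d → ℝ) (ω : Fin m → Fin d → ℝ) :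
    score d m r x y ω = (1 / (m:ℝ)) * ((Finset.univ.filter fun i => ω i ∈ AA (hthr r m) x y).card : ℝ) := by
  unfold score
  rw [Finset.card_filter]
  push_cast
  congr 1
  apply Finset.sum_congr rfl
  intro i _
  by_cases h1 : hthr r m ≤ dotp (ω i) x <;> by_cases h2 : hthr r m ≤ dotp (ω i) y <;> simp [AA, h1, h2]

open Classical in
lemma score_iff (d m : ℕ) (hm : 2 ≤ m) (r lam : ℝ) (x y : Fin d → ℝ) (ω : Fin m → Fin d → ℝ) :
    muM r m lam ≤ score d m r x y ω ↔ kk r lam m ≤ (Finset.univ.filter fun i => ω i ∈ AA (hthr r m) x y).card := by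
  rw [score_eq, kk, Nat.ceil_le, one_div, inv_mul_eq_div, le_div_iff₀ (by positivity), mul_comm]

lemma card_le_m {d m : ℕ} (p : Fin m → Prop) [DecidablePred p] : (Finset.univ.filter p).card ≤ m := by
  simpa using Finset.card_filter_le (Finset.univ : Finset (Fin m)) p

lemma dotp_abs {d : ℕ} (x y : Fin d → ℝ) (hx : unitVec x) (hy : unitVec y) : -1 ≤ dotp x y ∧ dotp x y ≤ 1 := by
  have h := Finset.sum_mul_sq_le_sq_mul_sq Finset.univ x y
  unfold unitVec at hx hy
  rw [hx, hy] at h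
  change dotp x y ^ 2 ≤ _ at h
  constructor <;> nlinarith

lemma prob_ret (d m : ℕ) (hm : 2 ≤ m) (r lam : ℝ) (x y : Fin d → ℝ) (hx : unitVec x) (hy : unitVec y) :
    (Prob d m).real {ω | muM r m lam ≤ score d m r x y ω} =
      ∑ j ∈ Finset.Icc (kk r lam m) m, bw m (muM r m (dotp x y)) j := by
  classical
  have := count_prob (Measure.pi fun _ : Fin d => gaussianReal 0 1) (AA_meas (hthr r m) x y) m (Finset.Icc (kk r lam m) m)
  rw [show (Measure.pi fun _ : Fin d => gaussianReal 0 1).real (AA (hthr r m) x y) = muM r m (dotp x y) from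
    prob_event x y hx hy _] at this
  rw [← this]
  unfold Prob
  congr 1
  ext ω
  simp only [Set.mem_ofPred_eq, Finset.mem_Icc]
  rw [score_iff d m hm]
  constructor
  · intro h
    exact ⟨by convert h, card_le_m (d := d) _⟩
  · intro h
    convert h.1

lemma prob_nret (d m : ℕ) (hm : 2 ≤ m) (r lam : ℝ) (x y : Fin d → ℝ) (hx : unitVec x) (hy : unitVec y) :
    (Prob d m).real {ω | ¬ muM r m lam ≤ score d m r x y ω} =
      ∑ j ∈ Finset.range (kk r lam m), bw m (muM r m (dotp x y)) j := by
  classical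
  have := count_prob (Measure.pi fun _ : Fin d => gaussianReal 0 1) (AA_meas (hthr r m) x y) m (Finset.range (kk r lam m))
  rw [show (Measure.pi fun _ : Fin d => gaussianReal 0 1).real (AA (hthr r m) x y) = muM r m (dotp x y) from
    prob_event x y hx hy _] at this
  rw [← this]
  unfold Prob
  congr 1
  ext ω
  simp only [Set.mem_ofPred_eq, Finset.mem_range]
  rw [score_iff d m hm, not_le]

lemma corpus_bound {d : ℕ} (r lam eta : ℝ) (hr : 0 < r) (h0 : 0 < lam) (h1 : lam < 1) (he : 0 < eta)
    (y : Fin d → ℝ) (hy : unitVec y) (n : ℕ) (hn : 2 ≤ n) (m : ℕ) (hm : 2 ≤ m) (B : ℝ) (hB : 0 ≤ B)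
    (hel : epsm r lam eta m < lam) (hel1 : lam + epsm r lam eta m < 1)
    (b1 : ∀ p, 0 ≤ p → p ≤ 1 → p ≤ muM r m (lam - epsm r lam eta m) →
        ∑ j ∈ Finset.Icc (kk r lam m) m, bw m p j ≤ B)
    (b2 : ∀ p, p ≤ 1 → muM r m (lam + epsm r lam eta m) ≤ p →
        ∑ j ∈ Finset.range (kk r lam m), bw m p j ≤ B)
    (X : Fin n → Fin d → ℝ) (hX : ∀ i, unitVec (X i)) :
    ((∫ ω, NI d m n r lam (epsm r lam eta m) y X ω ∂(Prob d m)) +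
      (∫ ω, NII d m n r lam (epsm r lam eta m) y X ω ∂(Prob d m))) / n ≤ B := by
  have hh := hthr_pos r hr m hm
  have hep := epsm_pos r lam eta hr h0 h1 he m hm
  have hS : ∀ i, MeasurableSet {ω | muM r m lam ≤ score d m r (X i) y ω} := fun i =>
    measurableSet_le measurable_const (score_measurable d m r _ _)
  have hS' : ∀ i, MeasurableSet {ω | ¬ muM r m lam ≤ score d m r (X i) y ω} := fun i => (hS i).compl
  have I1 := fun i => int_ite (Prob d m) (dotp (X i) y ≤ lam - epsm r lam eta m)
    (fun ω => muM r m lam ≤ score d m r (X i) y ω) (hS i)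
  have I2 := fun i => int_ite (Prob d m) (lam + epsm r lam eta m ≤ dotp (X i) y)
    (fun ω => ¬ muM r m lam ≤ score d m r (X i) y ω) (hS' i)
  unfold NI NII
  rw [integral_finsetSum _ fun i _ => (I1 i).1, integral_finsetSum _ fun i _ => (I2 i).1,
    ← Finset.sum_add_distrib]
  have hn0 : (0:ℝ) < n := by positivity
  rw [div_le_iff₀ hn0]
  refine (Finset.sum_le_card_nsmul _ _ B fun i _ => ?_).trans (by simp [mul_comm])
  have hd := dotp_abs (X i) y (hX i) hy
  have hp0 : 0 ≤ muM r m (dotp (X i) y) := mu_nonneg _ _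
  have hp1 : muM r m (dotp (X i) y) ≤ 1 := mu_le_one _ _
  by_cases c1 : dotp (X i) y ≤ lam - epsm r lam eta m
  · have c2 : ¬ (lam + epsm r lam eta m ≤ dotp (X i) y) := by linarith
    rw [(I1 i).2.1 c1, (I2 i).2.2 c2, add_zero, prob_ret d m hm r lam _ _ (hX i) hy]
    exact b1 _ hp0 hp1 (mu_mono _ _ _ hh hd.1 c1 (by linarith))
  · rw [(I1 i).2.2 c1, zero_add]
    by_cases c2 : lam + epsm r lam eta m ≤ dotp (X i) y
    · rw [(I2 i).2.1 c2, prob_nret d m hm r lam _ _ (hX i) hy]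
      exact b2 _ hp1 (mu_mono _ _ _ hh (by linarith) c2 hd.2)
    · rw [(I2 i).2.2 c2]; exact hB

lemma ff_val (n : ℕ) (hn : 2 ≤ n) :
    ff (2 * Real.sqrt (Real.log n)) = 1 / ((n : ℝ) ^ 2 * Real.sqrt (8 * Real.pi * Real.log n)) := by
  have hn0 : (0:ℝ) < n := by positivity
  have hl : 0 < Real.log n := Real.log_pos (by exact_mod_cast (by omega : 1 < n))
  unfold ff
  have e1 : (2 * Real.sqrt (Real.log n)) ^ 2 / 2 = Real.log (n ^ 2) := by
    rw [mul_pow, Real.sq_sqrt hl.le, Real.log_pow]; push_cast; ring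
  have e2 : Real.sqrt (8 * Real.pi * Real.log n) = Real.sqrt (2 * Real.pi) * (2 * Real.sqrt (Real.log n)) := by
    rw [show 8 * Real.pi * Real.log n = (2 * Real.pi) * (2 ^ 2 * Real.log n) by ring,
      Real.sqrt_mul (by positivity) (2 ^ 2 * Real.log n), Real.sqrt_mul (by positivity) (Real.log n), Real.sqrt_sq (by norm_num)]
  rw [e1, e2, Real.exp_neg, Real.exp_log (by positivity)]
  have : 0 < Real.sqrt (Real.log n) := Real.sqrt_pos.2 hl
  have : 0 < Real.sqrt (2 * Real.pi) := Real.sqrt_pos.2 (by positivity)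
  field_simp


/-- Main theorem, asymptotic version, with `η = 2√(log n)`. -/
theorem stmt3 {d : ℕ} (r : ℝ) (hr : r ∈ Set.Ioo (0 : ℝ) 1)
    (y : Fin d → ℝ) (hy : unitVec y)
    (lam : ℝ) (hlam : lam ∈ Set.Ioo (2 * r - 1) 1) (hlam0 : 0 < lam)
    (n : ℕ) (hn : 2 ≤ n) :
    Filter.limsup (fun m : ℕ =>
        ⨆ X : {X : Fin n → Fin d → ℝ // ∀ i, unitVec (X i)},
          ((∫ ω, NI d m n r lam (epsm r lam (2 * Real.sqrt (Real.log n)) m) y X.1 ω ∂(Prob d m)) +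
           (∫ ω, NII d m n r lam (epsm r lam (2 * Real.sqrt (Real.log n)) m) y X.1 ω ∂(Prob d m))) / n)
      atTop ≤ 1 / ((n : ℝ) ^ 2 * Real.sqrt (8 * Real.pi * Real.log n)) := by
  have hl : 0 < Real.log n := Real.log_pos (by exact_mod_cast (by omega : 1 < n))
  have he : 0 < 2 * Real.sqrt (Real.log n) := by positivity
  set eta := 2 * Real.sqrt (Real.log n) with heta
  obtain ⟨hr0, hr1⟩ := hr
  obtain ⟨hl1, hl2⟩ := hlam
  have tb := tail_bounds r lam eta hr0 hlam0 hl2 hl1 he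
  have lim : Tendsto (fun m => max (B1 r lam eta m) (B2 r lam eta m)) atTop (𝓝 (ff eta)) := by
    have := (B1_tendsto r lam eta hr0 hlam0 hl2 hl1 he).max (B2_tendsto r lam eta hr0 hlam0 hl2 hl1 he)
    rwa [max_self] at this
  rw [← ff_val n hn, ← heta, ← lim.limsup_eq]
  apply limsup_le_limsup
  · filter_upwards [tb] with m hm
    obtain ⟨hm2, p1, p2, e1, e2, b1, b2⟩ := hm
    have hB : 0 ≤ max (B1 r lam eta m) (B2 r lam eta m) := le_max_of_le_left p1
    refine Real.iSup_le (fun X => ?_) hB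
    exact corpus_bound r lam eta hr0 hlam0 hl2 he y hy n hn m hm2 _ hB e1 e2
      (fun p q1 q2 q3 => (b1 p q1 q2 q3).trans (le_max_left _ _))
      (fun p q1 q2 => (b2 p q1 q2).trans (le_max_right _ _)) X.1 X.2
  · refine isCoboundedUnder_le_of_le atTop (x := 0) fun m => ?_
    refine Real.iSup_nonneg fun X => ?_
    refine div_nonneg (add_nonneg (integral_nonneg fun ω => ?_) (integral_nonneg fun ω => ?_)) (by positivity)
    · exact Finset.sum_nonneg fun i _ => by split_ifs <;> norm_num
    · exact Finset.sum_nonneg fun i _ => by split_ifs <;> norm_num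
  · exact lim.isBoundedUnder_le

end
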